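/- arXiv:2306.15744 — 3 statements merged into one kernel-verified Lean document; each statement's English description precedes it below -/
import Mathlib

section
/- For any concept class H over a finite domain X that is mergeable with K-compressions, and every dataset size n, there exists a ticketed learning–unlearning scheme for H (valid for H-realizable datasets of size n) with space complexity (C_s = ⌈log₂|H|⌉, C_t = 2K·⌈log₂|Z|⌉ + ⌈log₂ n⌉), where Z = X × {0,1}. -/
/-- Empirical loss of hypothesis `h` on dataset `S` (sum of 0-1 losses). -/
def empLoss {X : Type} (h : X → Bool) (S : List (X × Bool)) : ℕ :=
  (S.map fun z => if h z.1 = z.2 then 0 else 1).sum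

/-- A dataset is `H`-realizable if some hypothesis in `H` has zero empirical loss on it. -/
def IsRealizable {X : Type} (H : Set (X → Bool)) (S : List (X × Bool)) : Prop :=
  ∃ h ∈ H, empLoss h S = 0

/-- The set of empirical risk minimizers in `H` on the dataset `S`. -/
def ERM {X : Type} (H : Set (X → Bool)) (S : List (X × Bool)) : Set (X → Bool) :=
  {h | h ∈ H ∧ ∀ g ∈ H, empLoss h S ≤ empLoss g S}

/-- The surviving dataset `S ∖ S_I`: the examples of `S` at indices outside `I`,
kept in their original order. -/
def surviving {Z : Type} (S : List Z) (I : Finset (Fin S.length)) : List Z :=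
  ((List.finRange S.length).filter fun i => decide (i ∉ I)).map S.get

/-- The unlearning request together with its tickets: the multiset of (example, ticket)
pairs over the indices in `I`. -/
def removedPairs {Z T : Type} (S : List Z) (tk : Fin S.length → T)
    (I : Finset (Fin S.length)) : Multiset (Z × T) :=
  I.val.map fun i => (S.get i, tk i)

/-! Peel a dataset into layers: the first layer is a compression of the dataset, the next one a
compression of what remains, and so on. The ticket of an example lists its own layer and the next
one. If `i` is the lowest layer no deleted example belongs to, then every lower layer contains a
deleted example, so the tickets reveal the layers up to `i`. Layer `i` is a compression of
everything from layer `i` on and remains one after the deletions, so merging it with the survivors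
of the lower layers gives the code of the surviving dataset. For `i = 0` nothing is revealed, but
then the answer is the hypothesis learned originally, which is the auxiliary information.

For the ticket size, a layer of at most `K` examples is padded to exactly `K` entries. The padding
symbol in the ticket of `(x, y)` is `(x, !y)`, which occurs in no realizable dataset containing
`(x, y)`. -/

section Realizability

variable {X : Type} {H : Set (X → Bool)} {S S' : List (X × Bool)}

theorem empLoss_eq_zero_iff {h : X → Bool} : empLoss h S = 0 ↔ ∀ z ∈ S, h z.1 = z.2 := by
  simp only [empLoss, List.sum_eq_zero_iff, List.forall_mem_map, ite_eq_left_iff, one_ne_zero,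
    imp_false, not_not]

theorem IsRealizable.of_subset (hS : IsRealizable H S) (hsub : S' ⊆ S) : IsRealizable H S' := by
  obtain ⟨h, hH, hloss⟩ := hS
  exact ⟨h, hH, empLoss_eq_zero_iff.2 fun z hz => empLoss_eq_zero_iff.1 hloss z (hsub hz)⟩

theorem IsRealizable.not_label_notMem (hS : IsRealizable H S) {z : X × Bool} (hz : z ∈ S) :
    (z.1, !z.2) ∉ S := by
  obtain ⟨h, -, hloss⟩ := hS
  intro hflip
  have hlabel := empLoss_eq_zero_iff.1 hloss
  exact Bool.not_ne_self z.2 ((hlabel _ hflip).symm.trans (hlabel z hz))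

end Realizability

section Cores

variable {Z β : Type*}

/-- `T` is a core of `S` if every dataset between `T` and `S` has the same code as `T`. This is what
a compression provides: the examples of `S` outside `T` can be deleted in any number and order. -/
def IsCore (enc : Multiset Z → β) (S T : Multiset Z) : Prop :=
  T ≤ S ∧ ∀ S', T ≤ S' → S' ≤ S → enc S' = enc T

namespace IsCore

variable {enc : Multiset Z → β} {S S' T T' : Multiset Z}

theorem of_le_of_le (h : IsCore enc S T) (hTT' : T ≤ T') (hT'S : T' ≤ S) : IsCore enc S T' :=
  ⟨hT'S, fun S' hS' hS'S =>
    (h.2 S' (hTT'.trans hS') hS'S).trans (h.2 T' hTT' hT'S).symm⟩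

theorem exists_ne_zero (h : IsCore enc S T) (hS : S ≠ 0) :
    ∃ T', T' ≠ 0 ∧ T'.card ≤ max T.card 1 ∧ IsCore enc S T' := by
  rcases eq_or_ne T 0 with rfl | hT
  · obtain ⟨z, hz⟩ := Multiset.exists_mem_of_ne_zero hS
    exact ⟨{z}, Multiset.singleton_ne_zero z, by simp,
      h.of_le_of_le (Multiset.zero_le _) (Multiset.singleton_le.2 hz)⟩
  · exact ⟨T, hT, le_max_left _ _, h⟩

theorem enc_add_eq {merge : β → β → β} {P : Multiset Z} (h : IsCore enc S T)
    (hmerge : ∀ A ≤ S, enc (P + A) = merge (enc P) (enc A)) (hTS' : T ≤ S') (hS'S : S' ≤ S) :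
    enc (P + S') = enc (P + T) := by
  rw [hmerge S' hS'S, hmerge T h.1, h.2 S' hTS' hS'S]

end IsCore

variable [BEq Z] [LawfulBEq Z] {valid : List Z → Prop} {Encode : List Z → β}
  {Compress : List Z → List Z → Prop}

theorem encode_eq_of_compress (hperm : ∀ S₁ S₂ : List Z, S₁.Perm S₂ → Encode S₁ = Encode S₂)
    (herase : ∀ S z, valid S → valid (S.erase z))
    (hencode : ∀ S T, valid S → Compress S T → Encode T = Encode S)
    (hcompress : ∀ S T, valid S → Compress S T → ∀ z ∈ S.diff T, Compress (S.erase z) T)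
    {S S' T : List Z} (hS : valid S) (hST : Compress S T) (hTS' : T.Subperm S')
    (hS'S : S'.Subperm S) : Encode S' = Encode T := by
  rcases hS'S.length_le.eq_or_lt with hlen | hlen
  · rw [hencode S T hS hST]
    exact hperm _ _ (hS'S.perm_of_length_le hlen.ge)
  · obtain ⟨z, hz⟩ := hS'S.exists_of_length_lt hlen
    have hzS : z ∈ S := hz.subset List.mem_cons_self
    have hz_diff : z ∈ S.diff T := by
      have hcount : S'.count z + 1 ≤ S.count z := by simpa using hz.count_le z
      have := hTS'.count_le z
      rw [← List.count_pos_iff, List.count_diff]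
      omega
    have hS'_erase : S'.Subperm (S.erase z) := by simpa using hz.erase z
    have : (S.erase z).length < S.length := by
      rw [List.length_erase_of_mem hzS]
      exact Nat.pred_lt (List.length_pos_of_mem hzS).ne'
    exact encode_eq_of_compress hperm herase hencode hcompress (herase S z hS)
      (hcompress S T hS hST z hz_diff) hTS' hS'_erase
termination_by S.length

theorem exists_isCore_of_compress {K : ℕ}
    (hperm : ∀ S₁ S₂ : List Z, S₁.Perm S₂ → Encode S₁ = Encode S₂)
    (herase : ∀ S z, valid S → valid (S.erase z))
    (hex : ∀ S, valid S → ∃ T, Compress S T)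
    (hcmp : ∀ S T, valid S → Compress S T →
      T.length ≤ K ∧ T.Subperm S ∧ Encode T = Encode S ∧
        ∀ z ∈ S.diff T, Compress (S.erase z) T)
    {S : List Z} (hS : valid S) :
    ∃ T : Multiset Z, T.card ≤ K ∧ IsCore (Quot.lift Encode hperm) (S : Multiset Z) T := by
  obtain ⟨T, hST⟩ := hex S hS
  refine ⟨T, (hcmp S T hS hST).1, (hcmp S T hS hST).2.1, fun S' => ?_⟩
  induction S' using Quot.inductionOn with
  | h S' =>
    exact encode_eq_of_compress hperm herase
      (fun S T hS hST => (hcmp S T hS hST).2.2.1) (fun S T hS hST => (hcmp S T hS hST).2.2.2) hS hST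

end Cores

section Subsamples

variable {ι Z : Type*}

/-- The examples at the positions in `J` of a dataset indexed by `ι`, with multiplicities. -/
def subsample (z : ι → Z) (J : Finset ι) : Multiset Z :=
  J.val.map z

variable {z : ι → Z} {J L : Finset ι}

theorem subsample_mono (h : J ⊆ L) : subsample z J ≤ subsample z L :=
  Multiset.map_le_map (Finset.val_le_iff.2 h)

theorem subsample_eq_sum (z : ι → Z) (J : Finset ι) : subsample z J = ∑ p ∈ J, {z p} := by
  rw [Finset.sum_eq_multiset_sum, ← Function.comp_def (fun a => ({a} : Multiset Z)) z,
    ← Multiset.map_map, Multiset.sum_map_singleton, subsample]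

theorem subsample_union [DecidableEq ι] (h : Disjoint J L) :
    subsample z (J ∪ L) = subsample z J + subsample z L := by
  simp only [subsample_eq_sum, Finset.sum_union h]

theorem subsample_sdiff [DecidableEq ι] [DecidableEq Z] (h : L ⊆ J) :
    subsample z (J \ L) = subsample z J - subsample z L := by
  rw [eq_tsub_iff_add_eq_of_le (subsample_mono h), ← subsample_union Finset.sdiff_disjoint,
    Finset.sdiff_union_of_subset h]

theorem exists_subset_subsample_eq {T : Multiset Z} (hT : T ≤ subsample z J) :
    ∃ L ⊆ J, subsample z L = T := by
  induction T using Quot.inductionOn with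
  | h t =>
    rw [subsample, ← Finset.coe_toList, Multiset.map_coe] at hT
    obtain ⟨l, hlt, hl⟩ := hT
    obtain ⟨l', hl', rfl⟩ := List.sublist_map_iff.1 hl
    exact ⟨⟨l', J.nodup_toList.sublist hl'⟩, fun p hp => Finset.mem_toList.1 (hl'.subset hp),
      Quot.sound hlt⟩

theorem subsample_univ_get (S : List Z) : subsample S.get Finset.univ = S := by
  simp [subsample]

theorem coe_surviving {Z : Type} (S : List Z) (I : Finset (Fin S.length)) :
    (surviving S I : Multiset Z) = subsample S.get Iᶜ := by
  have hcompl : Iᶜ = Finset.univ.filter (· ∉ I) := by grind [Finset.mem_compl]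
  rw [hcompl]
  rfl

end Subsamples

section Layerings

variable {ι Z β : Type*}

theorem exists_peeling {P : Finset ι → Finset ι → Prop} (hempty : P ∅ ∅)
    (hpeel : ∀ J : Finset ι, J.Nonempty → ∃ L ⊆ J, L.Nonempty ∧ P J L) (J : Finset ι) :
    ∃ lay : ι → ℕ, (∀ p ∈ J, lay p < J.card) ∧
      ∀ i, P {p ∈ J | i ≤ lay p} {p ∈ J | lay p = i} := by
  classical
  induction J using Finset.strongInduction with
  | H J ih =>
    rcases J.eq_empty_or_nonempty with rfl | hJ
    · exact ⟨fun _ => 0, by simp, fun i => by simpa using hempty⟩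
    obtain ⟨L, hLJ, hL, hPL⟩ := hpeel J hJ
    obtain ⟨lay, hlt, hP⟩ := ih (J \ L) (Finset.sdiff_ssubset hLJ hL)
    refine ⟨fun p => if p ∈ L then 0 else lay p + 1, fun p hp => ?_, ?_⟩
    · beta_reduce
      have hcard : (J \ L).card < J.card := Finset.card_lt_card (Finset.sdiff_ssubset hLJ hL)
      split_ifs with hpL
      · exact Finset.card_pos.2 hJ
      · exact (Nat.succ_le_of_lt (hlt p (Finset.mem_sdiff.2 ⟨hp, hpL⟩))).trans_lt hcard
    · rintro (_ | i)
      · convert hPL using 1 <;> grind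
      · convert hP i using 1 <;> grind

variable [Fintype ι]

/-- The examples of the `i`-th layer of a dataset `z` whose position `p` lies in layer `lay p`. -/
def layer (z : ι → Z) (lay : ι → ℕ) (i : ℕ) : Multiset Z :=
  subsample z {p | lay p = i}

theorem sum_layer (z : ι → Z) (lay : ι → ℕ) (i : ℕ) :
    ∑ j ∈ Finset.range (i + 1), layer z lay j = subsample z {p | lay p ≤ i} := by
  simp only [layer, subsample_eq_sum, Finset.sum_fiberwise_eq_sum_filter, Finset.mem_range,
    Nat.lt_succ_iff]

/-- A partition of the positions of a dataset into layers of at most `K` examples, each of which is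
a core of the union of itself and the later layers. -/
structure IsLayering (enc : Multiset Z → β) (K : ℕ) (z : ι → Z) (lay : ι → ℕ) : Prop where
  lt_card : ∀ p, lay p < Fintype.card ι
  card_layer_le : ∀ i, (layer z lay i).card ≤ K
  isCore_layer : ∀ i, IsCore enc (subsample z {p | i ≤ lay p}) (layer z lay i)

theorem exists_isLayering {enc : Multiset Z → β} {K : ℕ} {z : ι → Z} (hK : 0 < K)
    (hcore : ∀ A ≤ subsample z Finset.univ, ∃ T : Multiset Z, T.card ≤ K ∧ IsCore enc A T) :
    ∃ lay, IsLayering enc K z lay := by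
  have hpeel (J : Finset ι) (hJ : J.Nonempty) : ∃ L ⊆ J, L.Nonempty ∧
      (subsample z L).card ≤ K ∧ IsCore enc (subsample z J) (subsample z L) := by
    have hJ0 : subsample z J ≠ 0 := by simpa [subsample] using hJ.ne_empty
    obtain ⟨T, hTK, hT⟩ := hcore _ (subsample_mono J.subset_univ)
    obtain ⟨T', hT'0, hT'T, hT'⟩ := hT.exists_ne_zero hJ0
    obtain ⟨L, hLJ, rfl⟩ := exists_subset_subsample_eq hT'.1
    refine ⟨L, hLJ, Finset.nonempty_iff_ne_empty.2 ?_, hT'T.trans (max_le hTK hK), hT'⟩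
    rintro rfl
    exact hT'0 rfl
  have hempty : (subsample z ∅).card ≤ K ∧ IsCore enc (subsample z ∅) (subsample z ∅) :=
    ⟨Nat.zero_le K, le_rfl, fun _ h h' => congrArg enc (h'.antisymm h)⟩
  obtain ⟨lay, hlt, hlay⟩ := exists_peeling (P := fun J L =>
    (subsample z L).card ≤ K ∧ IsCore enc (subsample z J) (subsample z L)) hempty hpeel Finset.univ
  exact ⟨lay, fun p => hlt p (Finset.mem_univ p), fun i => (hlay i).1, fun i => (hlay i).2⟩

variable [DecidableEq ι] {z : ι → Z} {lay : ι → ℕ}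

theorem IsLayering.enc_subsample_compl {enc : Multiset Z → β} {K : ℕ} {merge : β → β → β}
    (hlay : IsLayering enc K z lay)
    (hmerge : ∀ A B, A + B ≤ subsample z Finset.univ → enc (A + B) = merge (enc A) (enc B))
    {I : Finset ι} {i : ℕ} (hi : ∀ p ∈ I, lay p ≠ i) :
    enc (subsample z Iᶜ) = enc (subsample z {p ∈ Iᶜ | lay p ≤ i}) := by
  let P : Finset ι := {p ∈ Iᶜ | lay p < i}
  let L : Finset ι := {p | lay p = i}
  let J : Finset ι := {p | i ≤ lay p}
  have hPJ : Disjoint P J := by grind [Finset.disjoint_left]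
  have hLJ : L ⊆ J := by grind
  have hJI : J \ I ⊆ J := Finset.sdiff_subset
  calc enc (subsample z Iᶜ)
      = enc (subsample z P + subsample z (J \ I)) := by
        rw [← subsample_union (hPJ.mono_right hJI)]
        congr 2
        grind [Finset.mem_compl]
    _ = enc (subsample z P + subsample z L) := by
        refine (hlay.isCore_layer i).enc_add_eq (merge := merge) (fun A hA => hmerge _ _ ?_)
          (subsample_mono (by grind)) (subsample_mono hJI)
        calc subsample z P + A
            ≤ subsample z P + subsample z J := by gcongr
          _ = subsample z (P ∪ J) := (subsample_union hPJ).symm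
          _ ≤ subsample z Finset.univ := subsample_mono (Finset.subset_univ _)
    _ = enc (subsample z {p ∈ Iᶜ | lay p ≤ i}) := by
        rw [← subsample_union (hPJ.mono_right hLJ)]
        congr 2
        grind [Finset.mem_compl]

end Layerings

section Tickets

variable {ι Z β : Type*}

/-- The ticket of an example: the number of its layer, and the contents of this layer and of the
next one. -/
structure Ticket (Z : Type*) where
  layer : ℕ
  current : Multiset Z
  next : Multiset Z

namespace Ticket

/-- What a ticket tells about the layer `j`; zero if it tells nothing. -/
def reveal (t : Ticket Z) (j : ℕ) : Multiset Z :=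
  if j = t.layer then t.current else if j = t.layer + 1 then t.next else 0

/-- The ticket of the position `p` in a layered dataset. -/
def ofLayering [Fintype ι] (z : ι → Z) (lay : ι → ℕ) (p : ι) : Ticket Z :=
  ⟨lay p, _root_.layer z lay (lay p), _root_.layer z lay (lay p + 1)⟩

end Ticket

/-- The smallest natural number not in `M`. -/
noncomputable def mex (M : Multiset ℕ) : ℕ :=
  sInf {i | i ∉ M}

theorem mex_notMem (M : Multiset ℕ) : mex M ∉ M := by
  obtain ⟨i, hi⟩ := Infinite.exists_notMem_finset M.toFinset
  exact Nat.sInf_mem (s := {i | i ∉ M}) ⟨i, fun h => hi (Multiset.mem_toFinset.2 h)⟩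

theorem mem_of_lt_mex {M : Multiset ℕ} {j : ℕ} (hj : j < mex M) : j ∈ M :=
  not_not.1 (Nat.notMem_of_lt_sInf hj)

/-- The lowest layer to which no example of the deletion request `R` belongs. -/
noncomputable def untouchedLayer (R : Multiset (Z × Ticket Z)) : ℕ :=
  mex (R.map fun r => r.2.layer)

/-- The surviving examples of the layers up to the untouched one, computed from the deletion
request `R`. Tickets that reveal a layer agree on it, so their supremum is that layer. -/
noncomputable def survivingPrefix [DecidableEq Z] (R : Multiset (Z × Ticket Z)) : Multiset Z :=
  (∑ j ∈ Finset.range (untouchedLayer R + 1), (R.map fun r => r.2.reveal j).sup) -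
    (R.filter fun r => r.2.layer ≤ untouchedLayer R).map Prod.fst

/-- The output for the deletion request `R`: that of `output` on the surviving prefix, unless the
bottom layer is untouched, in which case the hypothesis `h` learned originally is still right. -/
noncomputable def unlearn [DecidableEq Z] {γ : Type*} (output : Multiset Z → γ)
    (R : Multiset (Z × Ticket Z)) (h : γ) : γ :=
  if untouchedLayer R = 0 then h else output (survivingPrefix R)

variable [Fintype ι] (z : ι → Z) (lay : ι → ℕ) (I : Finset ι)

/-- The request to delete the positions in `I` of a layered dataset. -/
def deletionRequest : Multiset (Z × Ticket Z) :=
  I.val.map fun p => (z p, Ticket.ofLayering z lay p)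

variable {z lay I}

theorem lay_ne_untouchedLayer {p : ι} (hp : p ∈ I) :
    lay p ≠ untouchedLayer (deletionRequest z lay I) := by
  intro h
  apply mex_notMem ((deletionRequest z lay I).map fun r => r.2.layer)
  rw [← untouchedLayer, ← h, deletionRequest, Multiset.map_map]
  exact Multiset.mem_map_of_mem (fun p => lay p) hp

theorem exists_lay_eq_of_lt_untouchedLayer {j : ℕ}
    (hj : j < untouchedLayer (deletionRequest z lay I)) : ∃ p ∈ I, lay p = j := by
  simpa [deletionRequest, Ticket.ofLayering] using mem_of_lt_mex hj

theorem reveal_ofLayering_le (p : ι) (j : ℕ) :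
    (Ticket.ofLayering z lay p).reveal j ≤ layer z lay j := by
  unfold Ticket.reveal Ticket.ofLayering
  split_ifs with h h' <;> simp_all

theorem reveal_ofLayering {p : ι} {j : ℕ} (h : lay p = j ∨ lay p + 1 = j) :
    (Ticket.ofLayering z lay p).reveal j = layer z lay j := by
  rcases h with rfl | rfl <;> simp [Ticket.reveal, Ticket.ofLayering]

theorem map_fst_filter_deletionRequest (i : ℕ) :
    ((deletionRequest z lay I).filter fun r => r.2.layer ≤ i).map Prod.fst =
      subsample z {p ∈ I | lay p ≤ i} := by
  rw [deletionRequest, Multiset.filter_map, Multiset.map_map]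
  rfl

variable [DecidableEq Z]

theorem sup_reveal_eq_layer {p : ι} {j : ℕ} (hp : p ∈ I) (h : lay p = j ∨ lay p + 1 = j) :
    ((deletionRequest z lay I).map fun r => r.2.reveal j).sup = layer z lay j := by
  rw [deletionRequest, Multiset.map_map]
  apply le_antisymm
  · rw [Multiset.sup_le]
    simp only [Multiset.forall_mem_map_iff]
    exact fun q _ => reveal_ofLayering_le q j
  · rw [← reveal_ofLayering h]
    exact Multiset.le_sup
      (Multiset.mem_map_of_mem (fun q => (Ticket.ofLayering z lay q).reveal j) hp)

variable [DecidableEq ι]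

theorem survivingPrefix_deletionRequest (h : untouchedLayer (deletionRequest z lay I) ≠ 0) :
    survivingPrefix (deletionRequest z lay I) =
      subsample z {p ∈ Iᶜ | lay p ≤ untouchedLayer (deletionRequest z lay I)} := by
  rw [survivingPrefix, map_fst_filter_deletionRequest]
  generalize hi : untouchedLayer (deletionRequest z lay I) = i at h ⊢
  have hrevealed : ∀ j ∈ Finset.range (i + 1),
      ((deletionRequest z lay I).map fun r => r.2.reveal j).sup = layer z lay j := by
    subst hi
    intro j hj
    rcases (Finset.mem_range_succ_iff.1 hj).lt_or_eq with hlt | rfl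
    · obtain ⟨p, hp, hpj⟩ := exists_lay_eq_of_lt_untouchedLayer hlt
      exact sup_reveal_eq_layer hp (.inl hpj)
    · obtain ⟨p, hp, hpj⟩ := exists_lay_eq_of_lt_untouchedLayer (Nat.pred_lt h)
      exact sup_reveal_eq_layer hp (.inr (by rw [hpj]; exact Nat.succ_pred h))
  have hsdiff : ({p ∈ Iᶜ | lay p ≤ i} : Finset ι) =
      ({p | lay p ≤ i} : Finset ι) \ {p ∈ I | lay p ≤ i} := by
    grind [Finset.mem_compl]
  rw [Finset.sum_congr rfl hrevealed, sum_layer, hsdiff,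
    subsample_sdiff (Finset.filter_subset_filter _ I.subset_univ)]

theorem unlearn_deletionRequest {γ : Type*} {enc : Multiset Z → β} {dec : β → γ} {K : ℕ}
    {merge : β → β → β} (hlay : IsLayering enc K z lay)
    (hmerge : ∀ A B, A + B ≤ subsample z Finset.univ → enc (A + B) = merge (enc A) (enc B)) :
    unlearn (dec ∘ enc) (deletionRequest z lay I) (dec (enc (subsample z Finset.univ))) =
      dec (enc (subsample z Iᶜ)) := by
  have huntouched : ∀ p ∈ I, lay p ≠ untouchedLayer (deletionRequest z lay I) :=
    fun p hp => lay_ne_untouchedLayer hp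
  unfold unlearn
  split_ifs with h0
  · rw [h0] at huntouched
    have hI : ({p ∈ Iᶜ | lay p ≤ 0} : Finset ι) = {p ∈ (∅ : Finset ι)ᶜ | lay p ≤ 0} := by
      grind [Finset.mem_compl]
    rw [hlay.enc_subsample_compl hmerge huntouched, hI,
      ← hlay.enc_subsample_compl hmerge (I := ∅) (by simp), Finset.compl_empty]
  · rw [Function.comp_apply, survivingPrefix_deletionRequest h0,
      ← hlay.enc_subsample_compl hmerge huntouched]

end Tickets

section Encodings

theorem exists_bits_decoder {α τ : Type*} [Fintype α] [Nonempty τ] (f : α → τ) {b : ℕ}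
    (hb : Fintype.card α ≤ 2 ^ b) :
    ∃ dec : (Fin b → Bool) → τ, Set.range f ⊆ Set.range dec := by
  obtain ⟨e⟩ : Nonempty (α ↪ (Fin b → Bool)) :=
    Function.Embedding.nonempty_of_card_le (by simpa using hb)
  refine ⟨Function.extend e f fun _ => Classical.arbitrary τ, ?_⟩
  rintro _ ⟨a, rfl⟩
  exact ⟨e a, e.injective.extend_apply f _ a⟩

variable {Z : Type*} {K n : ℕ} {w : Z}

theorem exists_map_univ_filter_ne_eq [DecidableEq Z] {A : Multiset Z} (hA : A.card ≤ K)
    (hw : w ∉ A) :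
    ∃ f : Fin K → Z, ((Finset.univ.val.map f).filter fun z => z ≠ w) = A := by
  obtain ⟨l, hl⟩ : ∃ l : List Z, (l : Multiset Z) = A + Multiset.replicate (K - A.card) w :=
    ⟨_, Multiset.coe_toList _⟩
  have hlength : l.length = K := by
    have := congrArg Multiset.card hl
    rw [Multiset.coe_card, Multiset.card_add, Multiset.card_replicate] at this
    omega
  subst hlength
  refine ⟨l.get, ?_⟩
  rw [Fin.univ_val_map, List.ofFn_get, hl, Multiset.filter_add,
    Multiset.filter_eq_self.2 fun z hz => ne_of_mem_of_not_mem hz hw,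
    Multiset.filter_eq_nil.2 fun z hz => not_not.2 (Multiset.eq_of_mem_replicate hz), add_zero]

/-- The tickets in datasets of at most `n` examples with layers of at most `K` examples, in which
`w` does not occur and so can serve as a padding symbol. -/
structure Ticket.Fits (n K : ℕ) (w : Z) (t : Ticket Z) : Prop where
  layer_lt : t.layer < n
  card_current_le : t.current.card ≤ K
  card_next_le : t.next.card ≤ K
  notMem_current : w ∉ t.current
  notMem_next : w ∉ t.next

theorem Ticket.fits_ofLayering {ι β : Type*} [Fintype ι] {enc : Multiset Z → β} {z : ι → Z}
    {lay : ι → ℕ} (hlay : IsLayering enc K z lay) (hn : Fintype.card ι ≤ n)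
    (hw : w ∉ Set.range z) (p : ι) : (Ticket.ofLayering z lay p).Fits n K w := by
  have hw_layer (i : ℕ) : w ∉ _root_.layer z lay i := fun h => by
    obtain ⟨q, -, hq⟩ := Multiset.mem_map.1 h
    exact hw ⟨q, hq⟩
  exact ⟨(hlay.lt_card p).trans_le hn, hlay.card_layer_le _, hlay.card_layer_le _, hw_layer _,
    hw_layer _⟩

theorem exists_ticket_decoder [Fintype Z] (n K : ℕ) (w : Z) :
    ∃ read : (Fin (2 * K * Nat.clog 2 (Fintype.card Z) + Nat.clog 2 n) → Bool) → Ticket Z,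
      ∀ t : Ticket Z, t.Fits n K w → t ∈ Set.range read := by
  classical
  have : Nonempty (Ticket Z) := ⟨⟨0, 0, 0⟩⟩
  let unpad (f : Fin K → Z) : Multiset Z := (Finset.univ.val.map f).filter fun z => z ≠ w
  have hcard : Fintype.card (Fin n × (Fin K → Z) × (Fin K → Z)) ≤
      2 ^ (2 * K * Nat.clog 2 (Fintype.card Z) + Nat.clog 2 n) := by
    simp only [Fintype.card_prod, Fintype.card_fun, Fintype.card_fin]
    calc n * (Fintype.card Z ^ K * Fintype.card Z ^ K)
        = Fintype.card Z ^ (2 * K) * n := by ring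
      _ ≤ (2 ^ Nat.clog 2 (Fintype.card Z)) ^ (2 * K) * 2 ^ Nat.clog 2 n := by
        gcongr <;> exact Nat.le_pow_clog one_lt_two _
      _ = 2 ^ (2 * K * Nat.clog 2 (Fintype.card Z) + Nat.clog 2 n) := by ring
  obtain ⟨read, hread⟩ := exists_bits_decoder
    (fun a : Fin n × (Fin K → Z) × (Fin K → Z) => Ticket.mk a.1 (unpad a.2.1) (unpad a.2.2)) hcard
  refine ⟨read, fun t ht => hread ?_⟩
  obtain ⟨f, hf⟩ := exists_map_univ_filter_ne_eq ht.card_current_le ht.notMem_current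
  obtain ⟨g, hg⟩ := exists_map_univ_filter_ne_eq ht.card_next_le ht.notMem_next
  exact ⟨⟨⟨t.layer, ht.layer_lt⟩, f, g⟩, by simp only [unpad, hf, hg]⟩

end Encodings

section Schemes

variable {X : Type}

/-- A ticketed learning–unlearning scheme for `H`, valid for realizable datasets of at most `n`
examples, with auxiliary information in `A` and tickets in `T`. -/
def IsTiLUScheme {A T : Type} (H : Set (X → Bool)) (n : ℕ)
    (Learn : (S : List (X × Bool)) → (X → Bool) × A × (Fin S.length → T))
    (Unlearn : Multiset ((X × Bool) × T) → A → X → Bool) : Prop :=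
  ∀ S : List (X × Bool), S.length ≤ n → IsRealizable H S →
    (Learn S).1 ∈ ERM H S ∧
    ∀ I : Finset (Fin S.length),
      Unlearn (removedPairs S (Learn S).2.2 I) (Learn S).2.1 = (Learn (surviving S I)).1

variable {H : Set (X → Bool)} {n : ℕ}

theorem IsTiLUScheme.encode {A T A' T' : Type} [Nonempty A'] [Nonempty T']
    {Learn : (S : List (X × Bool)) → (X → Bool) × A × (Fin S.length → T)}
    {Unlearn : Multiset ((X × Bool) × T) → A → X → Bool} (h : IsTiLUScheme H n Learn Unlearn)
    {readAux : A' → A} {readTicket : X × Bool → T' → T}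
    (haux : ∀ S, S.length ≤ n → IsRealizable H S → (Learn S).2.1 ∈ Set.range readAux)
    (htickets : ∀ S, S.length ≤ n → IsRealizable H S →
      ∀ p, (Learn S).2.2 p ∈ Set.range (readTicket (S.get p))) :
    ∃ (Learn' : (S : List (X × Bool)) → (X → Bool) × A' × (Fin S.length → T'))
      (Unlearn' : Multiset ((X × Bool) × T') → A' → X → Bool),
      IsTiLUScheme H n Learn' Unlearn' := by
  refine ⟨fun S => ((Learn S).1, Function.invFun readAux (Learn S).2.1,
      fun p => Function.invFun (readTicket (S.get p)) ((Learn S).2.2 p)),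
    fun R a => Unlearn (R.map fun r => (r.1, readTicket r.1 r.2)) (readAux a),
    fun S hn hS => ⟨(h S hn hS).1, fun I => ?_⟩⟩
  have hdecoded : (removedPairs S
      (fun p => Function.invFun (readTicket (S.get p)) ((Learn S).2.2 p)) I).map
        (fun r => (r.1, readTicket r.1 r.2)) = removedPairs S (Learn S).2.2 I := by
    rw [removedPairs, Multiset.map_map, removedPairs]
    refine Multiset.map_congr rfl fun p _ => ?_
    exact congrArg (Prod.mk (S.get p)) (Function.invFun_eq (htickets S hn hS p))
  dsimp only
  rw [hdecoded, Function.invFun_eq (haux S hn hS), (h S hn hS).2 I]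

variable {β : Type*} {Encode : Multiset (X × Bool) → β} {Decode : β → X → Bool}
  {Merge : β → β → β} {K : ℕ}

theorem exists_isTiLUScheme_of_encode_eq {A T : Type} [Nonempty A] [Nonempty T]
    (hdecERM : ∀ S : List (X × Bool), IsRealizable H S → Decode (Encode S) ∈ ERM H S)
    (hencode : ∀ S : List (X × Bool), IsRealizable H S → Encode S = Encode 0) :
    ∃ (Learn : (S : List (X × Bool)) → (X → Bool) × A × (Fin S.length → T))
      (Unlearn : Multiset ((X × Bool) × T) → A → X → Bool), IsTiLUScheme H n Learn Unlearn := by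
  refine ⟨fun _ => (Decode (Encode 0), Classical.arbitrary A, fun _ => Classical.arbitrary T),
    fun _ _ => Decode (Encode 0), fun S _ hS => ⟨?_, fun _ => rfl⟩⟩
  exact hencode S hS ▸ hdecERM S hS

theorem IsRealizable.exists_isLayering {S : List (X × Bool)} (hS : IsRealizable H S) (hK : 0 < K)
    (hcore : ∀ S : List (X × Bool), IsRealizable H S →
      ∃ T : Multiset (X × Bool), T.card ≤ K ∧ IsCore Encode S T) :
    ∃ lay, IsLayering Encode K S.get lay := by
  refine _root_.exists_isLayering hK fun A hA => ?_
  induction A using Quot.inductionOn with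
  | h A =>
    rw [subsample_univ_get] at hA
    exact hcore A (hS.of_subset (Multiset.coe_subset.1 (Multiset.subset_of_le hA)))

theorem isTiLUScheme_of_isLayering [DecidableEq X] {lay : (S : List (X × Bool)) → Fin S.length → ℕ}
    (hdecERM : ∀ S : List (X × Bool), IsRealizable H S → Decode (Encode S) ∈ ERM H S)
    (hmerge : ∀ S₁ S₂ : List (X × Bool), IsRealizable H (S₁ ++ S₂) →
      Encode ↑(S₁ ++ S₂) = Merge (Encode S₁) (Encode S₂))
    (hlay : ∀ S, IsRealizable H S → IsLayering Encode K S.get (lay S)) :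
    IsTiLUScheme H n
      (fun S => (Decode (Encode S), Decode (Encode S), Ticket.ofLayering S.get (lay S)))
      (unlearn (Decode ∘ Encode)) := by
  refine fun S _ hS => ⟨hdecERM S hS, fun I => ?_⟩
  have hmerge_le (A B : Multiset (X × Bool)) (hAB : A + B ≤ subsample S.get Finset.univ) :
      Encode (A + B) = Merge (Encode A) (Encode B) := by
    induction A, B using Quot.induction_on₂ with
    | h A B =>
      rw [subsample_univ_get] at hAB
      exact hmerge A B (hS.of_subset (Multiset.coe_subset.1 (Multiset.subset_of_le hAB)))
  have hunlearn := unlearn_deletionRequest (dec := Decode) (I := I) (hlay S hS) hmerge_le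
  rwa [subsample_univ_get, ← coe_surviving] at hunlearn

end Schemes

theorem tilu_for_mergeable_with_compressions_general {X : Type} [Fintype X] {β : Type*}
    (H : Finset (X → Bool)) (K : ℕ) (Encode : Multiset (X × Bool) → β)
    (Decode : β → X → Bool) (Merge : β → β → β)
    (hdecERM : ∀ S : List (X × Bool), IsRealizable ↑H S → Decode (Encode S) ∈ ERM ↑H S)
    (hmerge : ∀ S₁ S₂ : List (X × Bool), IsRealizable ↑H (S₁ ++ S₂) →
      Encode ↑(S₁ ++ S₂) = Merge (Encode S₁) (Encode S₂))
    (hcore : ∀ S : List (X × Bool), IsRealizable ↑H S →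
      ∃ T : Multiset (X × Bool), T.card ≤ K ∧ IsCore Encode S T)
    (n : ℕ) :
    ∃ (Learn : (S : List (X × Bool)) →
          (X → Bool) × (Fin (Nat.clog 2 H.card) → Bool) ×
            (Fin S.length →
              Fin (2 * K * Nat.clog 2 (Fintype.card (X × Bool)) + Nat.clog 2 n) → Bool))
      (Unlearn :
        Multiset ((X × Bool) ×
            (Fin (2 * K * Nat.clog 2 (Fintype.card (X × Bool)) + Nat.clog 2 n) → Bool)) →
          (Fin (Nat.clog 2 H.card) → Bool) → (X → Bool)),
      IsTiLUScheme ↑H n Learn Unlearn := by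
  classical
  rcases K.eq_zero_or_pos with rfl | hK
  · refine exists_isTiLUScheme_of_encode_eq hdecERM fun S hS => ?_
    obtain ⟨T, hT, hST⟩ := hcore S hS
    rw [hST.2 S hST.1 le_rfl, Multiset.card_eq_zero.1 (Nat.le_zero.1 hT)]
  choose! lay hlay using fun S hS => IsRealizable.exists_isLayering (S := S) hS hK hcore
  obtain ⟨readAux, haux⟩ := exists_bits_decoder (Subtype.val : H → X → Bool)
    ((Fintype.card_coe H).trans_le (Nat.le_pow_clog one_lt_two _))
  choose readTicket htickets using exists_ticket_decoder (Z := X × Bool) n K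
  refine (isTiLUScheme_of_isLayering hdecERM hmerge hlay).encode (readAux := readAux)
    (readTicket := fun z => readTicket (z.1, !z.2))
    (fun S _ hS => haux ⟨⟨_, (hdecERM S hS).1⟩, rfl⟩)
    (fun S hn hS p => htickets _ _ (Ticket.fits_ofLayering (hlay S hS) (by simpa using hn) ?_ p))
  rintro ⟨q, hq⟩
  exact hS.not_label_notMem (S.get_mem p) (hq ▸ S.get_mem q)

/-- **Theorem (TiLU scheme for mergeable classes with compressions).** Let `H` be a `C`-bit
mergeable concept class over a finite domain `X` (witnessed by `Encode`, `Decode`, `Merge`),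
that moreover admits `K`-compressions: a relation `Compress` such that every `H`-realizable
dataset `S` has at least one compression, and any compression `T` of `S` satisfies
`|T| ≤ K`, `T ⊆ S` (as multisets), `Encode T = Encode S`, and `T` is a compression of
`S ∖ {z}` for every `z ∈ S ∖ T`. Then for every dataset size `n` there is a ticketed
learning–unlearning scheme for `H`, valid for `H`-realizable datasets of size (at most) `n`,
with auxiliary information of `⌈log₂ |H|⌉` bits and tickets of
`2K·⌈log₂ |Z|⌉ + ⌈log₂ n⌉` bits, where `Z = X × {0,1}`. -/
theorem tilu_for_mergeable_with_compressions {X : Type} [Fintype X] [DecidableEq X]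
    (H : Finset (X → Bool)) (C K : ℕ)
    (Encode : List (X × Bool) → Fin C → Bool)
    (Decode : (Fin C → Bool) → X → Bool)
    (Merge : (Fin C → Bool) → (Fin C → Bool) → Fin C → Bool)
    (Compress : List (X × Bool) → List (X × Bool) → Prop)
    (hperm : ∀ S₁ S₂ : List (X × Bool), S₁.Perm S₂ → Encode S₁ = Encode S₂)
    (hdecH : ∀ b, Decode b ∈ H)
    (hdecERM : ∀ S, IsRealizable ↑H S → Decode (Encode S) ∈ ERM ↑H S)
    (hmerge : ∀ S₁ S₂, IsRealizable ↑H (S₁ ++ S₂) →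
      Encode (S₁ ++ S₂) = Merge (Encode S₁) (Encode S₂))
    (hex : ∀ S, IsRealizable ↑H S → ∃ T, Compress S T)
    (hcmp : ∀ S T, IsRealizable ↑H S → Compress S T →
      T.length ≤ K ∧ T.Subperm S ∧ Encode T = Encode S ∧
        ∀ z ∈ S.diff T, Compress (S.erase z) T) :
    ∀ n : ℕ,
      ∃ (Learn : (S : List (X × Bool)) →
            (X → Bool) × (Fin (Nat.clog 2 H.card) → Bool) ×
              (Fin S.length →
                Fin (2 * K * Nat.clog 2 (Fintype.card (X × Bool)) + Nat.clog 2 n) → Bool))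
        (Unlearn :
          Multiset ((X × Bool) ×
              (Fin (2 * K * Nat.clog 2 (Fintype.card (X × Bool)) + Nat.clog 2 n) → Bool)) →
            (Fin (Nat.clog 2 H.card) → Bool) → (X → Bool)),
        ∀ S : List (X × Bool), S.length ≤ n → IsRealizable ↑H S →
          (Learn S).1 ∈ ERM ↑H S ∧
          ∀ I : Finset (Fin S.length),
            Unlearn (removedPairs S (Learn S).2.2 I) (Learn S).2.1 =
              (Learn (surviving S I)).1 :=
  fun n => tilu_for_mergeable_with_compressions_general H K (Quot.lift Encode hperm) Decode Merge
    hdecERM hmerge (fun _ => exists_isCore_of_compress hperm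
      (fun _ _ hS => hS.of_subset List.erase_subset) hex hcmp) n
end

section
/- There is a ticketed learning–unlearning scheme for the MinVal problem with space complexity (C_s = O(log|X|), C_t = O(log|X| + log α⁻¹(n))): for every finite linearly ordered domain X and every dataset S of n elements of X, Learn(S) returns min(S) (or ⊥ if S is empty), auxiliary information of O(log|X|) bits, and a ticket of O(log|X| + log α⁻¹(n)) bits per element, such that for every subset S_I of presented elements with their tickets, Unlearn returns min(S ∖ S_I) (or ⊥ if S ∖ S_I is empty). -/
/-- The Ackermann-like hierarchy from the paper: `A r 1 = 2` for all `r ≥ 1`,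
`A 1 t = 2 * t` for `t ≥ 2`, and `A (r+1) t = A r (A (r+1) (t-1))` for `t ≥ 2`.
(The values at `t = 0` and `r = 0` are junk values, never used for `r, t ≥ 1`.) -/
def A : ℕ → ℕ → ℕ
  | _, 0 => 0
  | _, 1 => 2
  | 0, t + 2 => 2 * (t + 2)
  | 1, t + 2 => 2 * (t + 2)
  | r + 2, t + 2 => A (r + 1) (A (r + 2) (t + 1))

/-- The Ackermann function `α(t) = A_t(t)`. -/
def ackFn (t : ℕ) : ℕ := A t t

/-- The inverse-Ackermann function: the smallest `t` such that `n ≤ α(t)`. -/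
noncomputable def invAck (n : ℕ) : ℕ := sInf {t | n ≤ ackFn t}

/-!
The ticket of an element stores the next larger element of `S`. Climbing from `min S` along these
pointers reaches the least surviving value, provided `Unlearn` can tell whether all copies of a
given value have been removed. To this end the `m` copies of a value carry symbols that form a
multiset `V m` of size `m`, where `V j` is never contained in `V m` for `0 < j < m ≤ n`: the
symbols on `j` of the copies form a submultiset of `V m`, so they can be `V j` only when `j = m`.

Dickson's lemma bounds the length of a sequence such as `V 1, …, V n` over a fixed alphabet, but
only by an Ackermannian function: there is such a sequence of vectors in `ℕ ^ r`, indexed by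
`x < i ≤ A r x`, whose `i`-th term has sum at most `i`. In dimension `r + 1` one concatenates
sequences of dimension `r` on the intervals between consecutive iterates of `A r`, with a new
coordinate that drops from one interval to the next. For `r = x = t = α⁻¹(n)` this covers all sizes
`i` with `t < i ≤ n`; each size `i ≤ t` gets a symbol of its own, so `O(t)` symbols suffice.
-/

open Finset

theorem A_one_left (t : ℕ) : A 1 t = 2 * t := by
  rcases t with _ | _ | t <;> simp [A]

theorem A_one_right (r : ℕ) : A r 1 = 2 := by
  rcases r with _ | _ | r <;> simp [A]

theorem A_add_two_add_two (r t : ℕ) : A (r + 2) (t + 2) = A (r + 1) (A (r + 2) (t + 1)) := by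
  simp [A]

theorem A_eq_iterate (r t : ℕ) : A (r + 2) (t + 1) = (A (r + 1))^[t + 1] 1 := by
  induction t with
  | zero => simp [A_one_right]
  | succ t ih => rw [A_add_two_add_two, ih, ← Function.iterate_succ_apply' (A (r + 1))]

theorem lt_A {t : ℕ} (r : ℕ) (ht : 0 < t) : t < A (r + 1) t := by
  induction r generalizing t with
  | zero => rw [A_one_left]; omega
  | succ r ihr =>
    induction t, ht using Nat.le_induction with
    | base => simp [A_one_right]
    | succ t ht iht =>
      obtain ⟨s, rfl⟩ := Nat.exists_eq_add_of_le' ht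
      rw [A_add_two_add_two]
      exact (Nat.succ_le_of_lt iht).trans_lt (ihr (by omega))

theorem le_ackFn_self (n : ℕ) : n ≤ ackFn n := by
  rcases n with _ | n
  · exact Nat.zero_le _
  · exact (lt_A n n.succ_pos).le

theorem le_ackFn_invAck (n : ℕ) : n ≤ ackFn (invAck n) :=
  Nat.sInf_mem (s := {t | n ≤ ackFn t}) ⟨n, le_ackFn_self n⟩

/-- The terms of `v` with index in `s` form a *bad sequence*, in the sense of well-quasi-order
theory: no term lies below a later one. -/
def IsBadOn {α : Type*} [LE α] (s : Set ℕ) (v : ℕ → α) : Prop :=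
  ∀ ⦃i⦄, i ∈ s → ∀ ⦃j⦄, j ∈ s → i < j → ¬ v i ≤ v j

namespace IsBadOn

variable {α β : Type*} [LE α] [LE β] {s t : Set ℕ} {v : ℕ → α} {w : ℕ → β}

theorem mono (hv : IsBadOn t v) (hst : s ⊆ t) : IsBadOn s v :=
  fun _ hi _ hj => hv (hst hi) (hst hj)

theorem of_le_imp_le (hv : IsBadOn s v) (h : ∀ i ∈ s, ∀ j ∈ s, w i ≤ w j → v i ≤ v j) :
    IsBadOn s w :=
  fun i hi j hj hij hle => hv hi hj hij (h i hi j hj hle)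

theorem comp_strictMonoOn {g : ℕ → ℕ} (hv : IsBadOn t v) (hg : StrictMonoOn g s)
    (hst : Set.MapsTo g s t) : IsBadOn s (v ∘ g) :=
  fun _ hi _ hj hij => hv (hst hi) (hst hj) (hg hi hj hij)

theorem ite_Ioc {a b c : ℕ} {v w : ℕ → α} (hv : IsBadOn (Set.Ioc a b) v)
    (hw : IsBadOn (Set.Ioc b c) w)
    (hvw : ∀ i ∈ Set.Ioc a b, ∀ j ∈ Set.Ioc b c, ¬ v i ≤ w j) :
    IsBadOn (Set.Ioc a c) fun i => if i ≤ b then v i else w i := by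
  rintro i ⟨hai, hic⟩ j ⟨haj, hjc⟩ hij
  rcases le_or_gt j b with hjb | hbj
  · simpa only [hij.le.trans hjb, hjb, if_true] using hv ⟨hai, hij.le.trans hjb⟩ ⟨haj, hjb⟩ hij
  · rcases le_or_gt i b with hib | hbi
    · simpa only [hib, hbj.not_ge, if_true, if_false] using hvw i ⟨hai, hib⟩ j ⟨hbj, hjc⟩
    · simpa only [hbi.not_ge, hbj.not_ge, if_false] using hw ⟨hbi, hic⟩ ⟨hbj, hjc⟩ hij

end IsBadOn

theorem isBadOn_piSingle {K : Type*} [DecidableEq K] {s : Set ℕ} {g : ℕ → K}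
    (hg : s.InjOn g) : IsBadOn s fun i => (Pi.single (g i) 1 : K → ℕ) := by
  intro i hi j hj hij hle
  have hne : g i ≠ g j := fun h => hij.ne (hg hi hj h)
  simpa [hne] using hle (g i)

/-- The new first coordinate counts down from `c - 1` to `0` along the intervals
`(f^[j] x, f^[j + 1] x]`, so that no term lies below one from a later interval. -/
theorem exists_isBadOn_iterate {d : ℕ} {f : ℕ → ℕ}
    (hf : ∀ x, ∃ u : ℕ → Fin d → ℕ, IsBadOn (Set.Ioc x (f x)) u ∧
      ∀ i ∈ Set.Ioc x (f x), ∑ k, u i k ≤ i) (c x : ℕ) :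
    ∃ u : ℕ → Fin (d + 1) → ℕ, IsBadOn (Set.Ioc x (f^[c] x)) u ∧
      ∀ i ∈ Set.Ioc x (f^[c] x), u i 0 < c ∧ ∑ k, u i k < i + c := by
  induction c generalizing x with
  | zero => exact ⟨0, by simp [IsBadOn], by simp⟩
  | succ c ih =>
    obtain ⟨u, hu, hu_sum⟩ := hf x
    obtain ⟨w, hw, hw_lt⟩ := ih (f x)
    have hcons : IsBadOn (Set.Ioc x (f x)) fun i => (Fin.cons c (u i) : Fin (d + 1) → ℕ) :=
      hu.of_le_imp_le fun i _ j _ h => (Fin.cons_le_cons.1 h).2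
    refine ⟨_, hcons.ite_Ioc hw fun i _ j hj h => ?_, fun i hi => ?_⟩
    · exact (hw_lt j hj).1.not_ge (h 0)
    · rcases le_or_gt i (f x) with hle | hgt
      · have hsum := hu_sum i ⟨hi.1, hle⟩
        simp only [hle, if_true, Fin.cons_zero, Fin.sum_cons]
        omega
      · obtain ⟨hfirst, hsum⟩ := hw_lt i ⟨hgt, hi.2⟩
        simp only [hgt.not_ge, if_false]
        omega

theorem exists_isBadOn_A (r x : ℕ) :
    ∃ u : ℕ → Fin (r + 1) → ℕ, IsBadOn (Set.Ioc x (A (r + 1) x)) u ∧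
      ∀ i ∈ Set.Ioc x (A (r + 1) x), ∑ k, u i k ≤ i := by
  induction r generalizing x with
  | zero =>
    simp only [zero_add, A_one_left]
    refine ⟨fun i _ => 2 * x - i, fun i _ j hj hij hle => ?_, fun i hi => ?_⟩
    · have hcoord : 2 * x - i ≤ 2 * x - j := hle 0
      have := hj.2
      omega
    · have := hi.1
      exact (Fin.sum_univ_one _).trans_le (show 2 * x - i ≤ i by omega)
  | succ r ih =>
    rcases x with _ | c
    · exact ⟨0, by simp [IsBadOn, A], by simp [A]⟩
    · obtain ⟨u, hu, hu_lt⟩ := exists_isBadOn_iterate ih (c + 1) 1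
      rw [← A_eq_iterate] at hu hu_lt
      -- The blocks start at index `1`; delaying them by `c` pays for the first coordinate.
      have hmaps : Set.MapsTo (· - c) (Set.Ioc (c + 1) (A (r + 2) (c + 1)))
          (Set.Ioc 1 (A (r + 2) (c + 1))) := by
        rintro i ⟨hci, hi⟩
        exact ⟨by change 1 < i - c; omega, (Nat.sub_le i c).trans hi⟩
      refine ⟨_, hu.comp_strictMonoOn (fun i hi j _ hij => ?_) hmaps, fun i hi => ?_⟩
      · have := hi.1
        change i - c < j - c
        omega
      · have hsum := (hu_lt _ (hmaps hi)).2
        have := hi.1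
        simp only [Function.comp_apply] at hsum ⊢
        omega

theorem exists_isBadOn_ackFn (t : ℕ) :
    ∃ v : ℕ → Fin (t + 1) ⊕ Fin t → ℕ, IsBadOn (Set.Ioc 0 (ackFn t)) v ∧
      ∀ i ∈ Set.Ioc 0 (ackFn t), ∑ k, v i k ≤ i := by
  obtain ⟨u, hu, hu_sum⟩ : ∃ u : ℕ → Fin t → ℕ, IsBadOn (Set.Ioc t (ackFn t)) u ∧
      ∀ i ∈ Set.Ioc t (ackFn t), ∑ k, u i k ≤ i := by
    rcases t with _ | r
    · exact ⟨0, by simp [IsBadOn, ackFn, A], by simp⟩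
    · exact exists_isBadOn_A r (r + 1)
  have hinj : (Set.Ioc 0 t).InjOn (Fin.ofNat (t + 1)) := fun i hi j hj h => by
    simpa [Nat.mod_eq_of_lt (Nat.lt_succ_of_le hi.2), Nat.mod_eq_of_lt (Nat.lt_succ_of_le hj.2)]
      using congrArg Fin.val h
  have hsmall : IsBadOn (Set.Ioc 0 t) fun i =>
      (Sum.elim (Pi.single (Fin.ofNat (t + 1) i) 1) 0 : Fin (t + 1) ⊕ Fin t → ℕ) :=
    (isBadOn_piSingle hinj).of_le_imp_le fun i _ j _ h k => h (.inl k)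
  have hlarge : IsBadOn (Set.Ioc t (ackFn t)) fun i =>
      (Sum.elim 0 (u i) : Fin (t + 1) ⊕ Fin t → ℕ) :=
    hu.of_le_imp_le fun i _ j _ h k => h (.inr k)
  refine ⟨_, hsmall.ite_Ioc hlarge fun i _ j _ h => ?_, fun i hi => ?_⟩
  · simpa using h (.inl (Fin.ofNat (t + 1) i))
  · rcases le_or_gt i t with hit | hti
    · simpa [hit] using Nat.succ_le_of_lt hi.1
    · simpa [hti.not_ge] using hu_sum i ⟨hti, hi.2⟩

theorem exists_multiset_isBadOn {K : Type*} [Fintype K] {s : Set ℕ} {v : ℕ → K → ℕ}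
    (hv : IsBadOn s v) (hsum : ∀ i ∈ s, ∑ k, v i k ≤ i) :
    ∃ V : ℕ → Multiset (Option K), (∀ i, (V i).card = i) ∧ IsBadOn s V := by
  classical
  set V : ℕ → Multiset (Option K) := fun i =>
    if i ∈ s then ∑ k, Multiset.replicate (v i k) (some k) +
      Multiset.replicate (i - ∑ k, v i k) none
    else Multiset.replicate i none with hV
  have hcount : ∀ i ∈ s, ∀ k, (V i).count (some k) = v i k := fun i hi k => by
    simp [hV, hi, Multiset.count_sum', Multiset.count_replicate]
  refine ⟨V, fun i => ?_, hv.of_le_imp_le fun i hi j hj hle k => ?_⟩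
  · by_cases hi : i ∈ s
    · simp [hV, hi, hsum i hi]
    · simp [hV, hi]
  · rw [← hcount i hi k, ← hcount j hj k]
    exact Multiset.count_le_of_le _ hle

theorem IsBadOn.eq_of_map_val_eq {ι K : Type*} {V : ℕ → Multiset K} {n : ℕ}
    (hV : IsBadOn (Set.Ioc 0 n) V) {f : ι → K} {s t : Finset ι} (hst : s ⊆ t)
    (hs : s.Nonempty) (htn : #t ≤ n) (ht : t.val.map f = V #t) (hsV : s.val.map f = V #s) :
    s = t := by
  by_contra hne
  have hcard : #s < #t := card_lt_card (hst.ssubset_of_ne hne)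
  refine hV ⟨hs.card_pos, hcard.le.trans htn⟩ ⟨hs.card_pos.trans hcard, htn⟩ hcard ?_
  rw [← hsV, ← ht]
  exact Multiset.map_le_map (val_le_iff.2 hst)

theorem exists_map_fiber_eq {ι X K : Type*} [Fintype ι] [DecidableEq X] (g : ι → X)
    (V : X → Multiset K) (hV : ∀ x, (V x).card = #{i | g i = x}) :
    ∃ f : ι → K, ∀ x, (univ.filter fun i => g i = x).val.map f = V x := by
  classical
  let e (x : X) : {i // g i = x} ≃ V x :=
    Fintype.equivOfCardEq (by rw [Fintype.card_subtype, Multiset.card_coe, hV])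
  refine ⟨fun i => (e (g i) ⟨i, rfl⟩).1, fun x => ?_⟩
  have hfiber : ∀ i : {i // g i = x}, (e (g i) ⟨i, rfl⟩).1 = (e x i).1 := by
    rintro ⟨i, rfl⟩
    rfl
  rw [← subtype_map, subtype_univ, map_val, Multiset.map_map]
  calc univ.val.map (fun i : {i // g i = x} => (e (g i) ⟨i, rfl⟩).1)
      = (univ.val.map (e x)).map (fun k => k.1) := by
        rw [Multiset.map_map]
        exact Multiset.map_congr rfl fun i _ => hfiber i
    _ = V x := by rw [Multiset.map_univ_val_equiv, Multiset.map_univ_coe]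

namespace MinVal

section NextAbove

variable {X : Type*} [LinearOrder X]

theorem min?_eq_min?_of_subset {L D : List X} (hDL : D ⊆ L)
    (hmin : ∀ x, L.min? = some x → x ∈ D) : D.min? = L.min? := by
  rcases hL : L.min? with _ | x
  · rw [List.min?_eq_none_iff] at hL ⊢
    exact List.subset_nil.1 (hL ▸ hDL)
  · exact List.min?_eq_some_iff.2
      ⟨hmin x hL, fun b hb => (List.min?_eq_some_iff.1 hL).2 b (hDL hb)⟩

/-- The least element of `S` larger than `y`. A ticket stores it, so that the tickets of the
removed elements let `Unlearn` walk up the distinct values of `S`. -/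
def nextAbove (S : List X) (y : X) : Option X :=
  (S.filter (y < ·)).min?

theorem nextAbove_eq_some_iff {S : List X} {x y : X} :
    nextAbove S y = some x ↔ (x ∈ S ∧ y < x) ∧ ∀ z ∈ S, y < z → x ≤ z := by
  simp [nextAbove, List.min?_eq_some_iff]

theorem min?_eq_some_or_exists_nextAbove {S : List X} {x : X} (hx : x ∈ S) :
    S.min? = some x ∨ ∃ y ∈ S, y < x ∧ nextAbove S y = some x := by
  by_cases hlow : ∃ y ∈ S, y < x
  · obtain ⟨y, hy, hmax⟩ := (S.toFinset.filter (· < x)).exists_maximal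
      (by simpa [Finset.Nonempty] using hlow)
    obtain ⟨hyS, hyx⟩ : y ∈ S ∧ y < x := by simpa using hy
    refine .inr ⟨y, hyS, hyx, nextAbove_eq_some_iff.2 ⟨⟨hx, hyx⟩, fun z hz hyz => ?_⟩⟩
    by_contra! hzx
    exact hyz.not_ge (hmax (by simp [hz, hzx]) hyz.le)
  · push Not at hlow
    exact .inl (List.min?_eq_some_iff.2 ⟨hx, hlow⟩)

end NextAbove

section Unlearn

variable {X K : Type*}

/-- The unlearning request for `I`: each removed element together with its ticket, before
encoding into bits, which is the next larger element of `S` and a symbol. -/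
def request [LinearOrder X] (S : List X) (sym : Fin S.length → K) (I : Finset (Fin S.length)) :
    Multiset (X × Option X × K) :=
  I.val.map fun i => (S.get i, nextAbove S (S.get i), sym i)

/-- The symbols on the tickets presented for the value `x`. -/
def presentedSymbols [DecidableEq X] (M : Multiset (X × Option X × K)) (x : X) : Multiset K :=
  (M.filter (·.1 = x)).map (·.2.2)

/-- The test by which `Unlearn` decides that all copies of `x` have been removed: the presented
symbols are those that `Learn` hands out to a value with that many copies. -/
def IsExhausted [DecidableEq X] (V : ℕ → Multiset K) (M : Multiset (X × Option X × K))
    (x : X) : Prop :=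
  presentedSymbols M x ≠ 0 ∧ presentedSymbols M x = V (presentedSymbols M x).card

/-- The values `Unlearn` knows to belong to the dataset: the stored minimum and the elements that
the presented tickets point to. -/
def candidates [DecidableEq X] (M : Multiset (X × Option X × K)) (a : Option X) : Finset X :=
  a.toFinset ∪ (M.filterMap (·.2.1)).toFinset

open Classical in
/-- The answer of `Unlearn`, on decoded tickets and decoded auxiliary information. -/
noncomputable def unlearnMin [LinearOrder X] (V : ℕ → Multiset K)
    (M : Multiset (X × Option X × K)) (a : Option X) : Option X :=
  ((candidates M a).filter (¬ IsExhausted V M ·)).toList.min?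

variable [LinearOrder X]

theorem mem_candidates_request {S : List X} {sym : Fin S.length → K} {I : Finset (Fin S.length)}
    {x : X} : x ∈ candidates (request S sym I) S.min? ↔
      S.min? = some x ∨ ∃ i ∈ I, nextAbove S (S.get i) = some x := by
  simp [candidates, request]

theorem mem_of_mem_candidates_request {S : List X} {sym : Fin S.length → K}
    {I : Finset (Fin S.length)} {x : X} (hx : x ∈ candidates (request S sym I) S.min?) : x ∈ S := by
  rcases mem_candidates_request.1 hx with hmin | ⟨i, -, hnext⟩
  · exact (List.min?_eq_some_iff.1 hmin).1
  · exact (nextAbove_eq_some_iff.1 hnext).1.1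

theorem presentedSymbols_request (S : List X) (sym : Fin S.length → K) (I : Finset (Fin S.length))
    (x : X) : presentedSymbols (request S sym I) x = (I.filter (S.get · = x)).val.map sym := by
  simp [presentedSymbols, request, Multiset.filter_map]

end Unlearn

section Correctness

theorem mem_surviving {Z : Type} {S : List Z} {I : Finset (Fin S.length)} {x : Z} :
    x ∈ surviving S I ↔ ∃ i ∉ I, S.get i = x := by
  simp [surviving]

theorem mem_of_mem_surviving {Z : Type} {S : List Z} {I : Finset (Fin S.length)} {x : Z}
    (hx : x ∈ surviving S I) : x ∈ S := by
  obtain ⟨i, -, rfl⟩ := mem_surviving.1 hx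
  exact S.get_mem i

variable {X : Type} [LinearOrder X] {S : List X}

theorem min?_eq_some_or_exists_nextAbove_of_min?_surviving {I : Finset (Fin S.length)} {x : X}
    (hx : (surviving S I).min? = some x) :
    S.min? = some x ∨ ∃ i ∈ I, nextAbove S (S.get i) = some x := by
  obtain ⟨hxI, hle⟩ := List.min?_eq_some_iff.1 hx
  refine (min?_eq_some_or_exists_nextAbove (mem_of_mem_surviving hxI)).imp_right ?_
  rintro ⟨y, hy, hyx, hnext⟩
  obtain ⟨i, rfl⟩ := List.mem_iff_get.1 hy
  exact ⟨i, by_contra fun hi => hyx.not_ge (hle _ (mem_surviving.2 ⟨i, hi, rfl⟩)), hnext⟩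

variable {K : Type*} {V : ℕ → Multiset K} {sym : Fin S.length → K}

theorem isExhausted_request_iff (hV : IsBadOn (Set.Ioc 0 S.length) V)
    (hsym : ∀ x, (univ.filter (S.get · = x)).val.map sym = V #{i | S.get i = x})
    (I : Finset (Fin S.length)) {x : X} (hx : x ∈ S) :
    IsExhausted V (request S sym I) x ↔ x ∉ surviving S I := by
  have hsub : I.filter (S.get · = x) ⊆ univ.filter (S.get · = x) :=
    filter_subset_filter _ (subset_univ I)
  have hcard : #{i | S.get i = x} ≤ S.length := by
    simpa using card_le_univ (univ.filter (S.get · = x))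
  have hsurv : I.filter (S.get · = x) = univ.filter (S.get · = x) ↔ x ∉ surviving S I := by
    simp only [Finset.ext_iff, mem_filter, mem_univ, true_and, mem_surviving]
    grind
  rw [← hsurv, IsExhausted, presentedSymbols_request, Multiset.card_map, card_val, ne_eq,
    Multiset.map_eq_zero, val_eq_zero, ← ne_eq, ← nonempty_iff_ne_empty]
  constructor
  · rintro ⟨hne, hmap⟩
    exact hV.eq_of_map_val_eq hsub hne hcard (hsym x) hmap
  · intro heq
    obtain ⟨i, rfl⟩ := List.mem_iff_get.1 hx
    rw [heq]
    exact ⟨⟨i, by simp⟩, hsym _⟩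

theorem unlearnMin_request (hV : IsBadOn (Set.Ioc 0 S.length) V)
    (hsym : ∀ x, (univ.filter (S.get · = x)).val.map sym = V #{i | S.get i = x})
    (I : Finset (Fin S.length)) :
    unlearnMin V (request S sym I) S.min? = (surviving S I).min? := by
  classical
  refine min?_eq_min?_of_subset (fun x hx => ?_) fun x hx => ?_
  · obtain ⟨hcand, hnot⟩ := mem_filter.1 (mem_toList.1 hx)
    rwa [isExhausted_request_iff hV hsym I (mem_of_mem_candidates_request hcand), not_not] at hnot
  · have hxI := (List.min?_eq_some_iff.1 hx).1
    rw [mem_toList, mem_filter,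
      isExhausted_request_iff hV hsym I (mem_of_mem_surviving hxI), not_not]
    exact ⟨mem_candidates_request.2
      (min?_eq_some_or_exists_nextAbove_of_min?_surviving hx), hxI⟩

end Correctness

end MinVal

theorem exists_leftInverse_bits {α : Type*} [Fintype α] [Nonempty α] {k : ℕ}
    (h : Fintype.card α ≤ 2 ^ k) :
    ∃ (enc : α → Fin k → Bool) (dec : (Fin k → Bool) → α), Function.LeftInverse dec enc := by
  obtain ⟨e⟩ := Function.Embedding.nonempty_of_card_le (β := Fin k → Bool) (by simpa using h)
  exact ⟨e, Function.invFun e, Function.leftInverse_invFun e.injective⟩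

theorem card_option_le_two_pow (X : Type*) [Fintype X] :
    Fintype.card (Option X) ≤ 2 ^ (Nat.clog 2 (Fintype.card X) + 1) := by
  have hX := Nat.le_pow_clog one_lt_two (Fintype.card X)
  have hpos := Nat.one_le_two_pow (n := Nat.clog 2 (Fintype.card X))
  rw [Fintype.card_option, pow_succ]
  omega

theorem card_ticket_le_two_pow (X : Type*) [Fintype X] (t : ℕ) :
    Fintype.card (Option X × Option (Fin (t + 1) ⊕ Fin t)) ≤
      2 ^ (Nat.clog 2 (Fintype.card X) + Nat.clog 2 t + 3) := by
  have ht := Nat.le_pow_clog one_lt_two t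
  have hpos := Nat.one_le_two_pow (n := Nat.clog 2 t)
  have hsym : Fintype.card (Option (Fin (t + 1) ⊕ Fin t)) ≤ 2 ^ (Nat.clog 2 t + 2) := by
    simp only [Fintype.card_option, Fintype.card_sum, Fintype.card_fin, pow_add]
    omega
  calc _ ≤ 2 ^ (Nat.clog 2 (Fintype.card X) + 1) * 2 ^ (Nat.clog 2 t + 2) := by
        rw [Fintype.card_prod]
        exact Nat.mul_le_mul (card_option_le_two_pow X) hsym
    _ = _ := by ring

theorem minval_ticketed_scheme_general :
    ∃ c : ℕ, 0 < c ∧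
      ∀ (X : Type) [LinearOrder X] [Fintype X] (n : ℕ), ∃ cs ct : ℕ,
        cs ≤ c * (Nat.clog 2 (Fintype.card X) + 1) ∧
        ct ≤ c * (Nat.clog 2 (Fintype.card X) + Nat.clog 2 (invAck n) + 1) ∧
        ∃ (Learn : (S : List X) →
              Option X × (Fin cs → Bool) × (Fin S.length → Fin ct → Bool))
          (Unlearn : Multiset (X × (Fin ct → Bool)) → (Fin cs → Bool) → Option X),
          ∀ S : List X, S.length ≤ n →
            (Learn S).1 = S.min? ∧
            ∀ I : Finset (Fin S.length),
              Unlearn (I.val.map fun i => (S.get i, (Learn S).2.2 i)) (Learn S).2.1 =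
                (surviving S I).min? := by
  refine ⟨3, by norm_num, fun X _ _ n => ⟨Nat.clog 2 (Fintype.card X) + 1,
    Nat.clog 2 (Fintype.card X) + Nat.clog 2 (invAck n) + 3, by omega, by omega, ?_⟩⟩
  obtain ⟨v, hv, hv_sum⟩ := exists_isBadOn_ackFn (invAck n)
  obtain ⟨V, hV_card, hV⟩ := exists_multiset_isBadOn hv hv_sum
  obtain ⟨encAux, decAux, hAux⟩ := exists_leftInverse_bits (card_option_le_two_pow X)
  obtain ⟨encTicket, decTicket, hTicket⟩ :=
    exists_leftInverse_bits (card_ticket_le_two_pow X (invAck n))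
  choose sym hsym using fun S : List X =>
    exists_map_fiber_eq S.get (fun x => V #{i | S.get i = x}) fun x => hV_card _
  refine ⟨fun S => (S.min?, encAux S.min?,
      fun i => encTicket (MinVal.nextAbove S (S.get i), sym S i)),
    fun M a => MinVal.unlearnMin V (M.map fun p => (p.1, decTicket p.2)) (decAux a),
    fun S hS => ⟨rfl, fun I => ?_⟩⟩
  have hVS : IsBadOn (Set.Ioc 0 S.length) V :=
    hV.mono (Set.Ioc_subset_Ioc_right (hS.trans (le_ackFn_invAck n)))
  simp only [Multiset.map_map, Function.comp_def, hAux _, hTicket _]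
  exact MinVal.unlearnMin_request hVS (hsym S) I

/-- **Theorem (TiLU scheme for MinVal).** There is a constant `c` such that for every finite
linearly ordered domain `{1, …, N}` (represented by `Fin N`) and every dataset size `n`,
there is a ticketed learning–unlearning scheme for the MinVal problem with auxiliary
information of `O(log|X|)` bits and tickets of `O(log|X| + log α⁻¹(n))` bits: for every
dataset `S` of `n` elements, `Learn S` returns `min S` (`none` if `S` is empty), the
auxiliary string and a ticket per element, and for every unlearning request `I` (consisting
of the removed elements together with their tickets), `Unlearn` returns `min (S ∖ S_I)`
(`none` if `S ∖ S_I` is empty). -/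
theorem minval_ticketed_scheme :
    ∃ c : ℕ, 0 < c ∧
      ∀ N n : ℕ, ∃ cs ct : ℕ,
        cs ≤ c * (Nat.clog 2 N + 1) ∧
        ct ≤ c * (Nat.clog 2 N + Nat.clog 2 (invAck n) + 1) ∧
        ∃ (Learn : (S : List (Fin N)) →
              Option (Fin N) × (Fin cs → Bool) × (Fin S.length → Fin ct → Bool))
          (Unlearn : Multiset (Fin N × (Fin ct → Bool)) → (Fin cs → Bool) → Option (Fin N)),
          ∀ S : List (Fin N), S.length = n →
            (Learn S).1 = S.min? ∧
            ∀ I : Finset (Fin S.length),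
              Unlearn (I.val.map fun i => (S.get i, (Learn S).2.2 i)) (Learn S).2.1 =
                (surviving S I).min? := by
  obtain ⟨c, hc, h⟩ := minval_ticketed_scheme_general
  refine ⟨c, hc, fun N n => ?_⟩
  obtain ⟨cs, ct, hcs, hct, Learn, Unlearn, hLU⟩ := Fintype.card_fin N ▸ h (Fin N) n
  exact ⟨cs, ct, hcs, hct, Learn, Unlearn, fun S hS => hLU S hS.le⟩
end

section
/- There exists a ticketed learning–unlearning scheme for the class H_thresh of one-dimensional threshold functions over X = {1, …, |X|}, valid for H_thresh-realizable datasets of size n, with space complexity (C_s = O(log|X|), C_t = O(log α⁻¹(n))): Learn(S) returns h ∈ ERM_{H_thresh}(S), auxiliary information of O(log|X|) bits, and a ticket of O(log α⁻¹(n)) bits per example, such that for every I ⊆ [n], Unlearn(S_I, aux, (t_i)_{i∈I}) returns the same hypothesis that Learn returns on S ∖ S_I. -/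
/-- The threshold function `h_{>a}(x) = 1{x > a}` on the domain `{1, …, N}`, represented on
`Fin N` (where `x : Fin N` stands for the domain point `x + 1`): `h_{>a} x = 1{a ≤ x}`. -/
def thrFn (N : ℕ) (a : ℕ) : Fin N → Bool := fun x => decide (a ≤ (x : ℕ))

/-- The class of one-dimensional threshold functions over `{1, …, N}`,
indexed by `a ∈ {0, 1, …, N}`. -/
def Hthr (N : ℕ) : Set (Fin N → Bool) := {h | ∃ a ≤ N, h = thrFn N a}

/-!
Give every dataset the negative position `0` and the positive position `N + 1`, and learn the
midpoint of the smallest dyadic block that contains both a negative and a positive position. The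
height of this block can be read off from any threshold `m` consistent with the data: it is the
larger of the dyadic distances from `m` to the nearest negative and to the nearest positive
position, and the block is the one of that height around `m`. After a deletion the old threshold
is still consistent, so the new one is determined by the old one together with the pairs (label,
dyadic distance from the old threshold) that occur among the survivors. There are `O(log N)` such
pairs, and the auxiliary string lists those occurring in the full dataset.

It remains to detect from the deleted examples that all examples of such a class are gone. Fix a
family of multisets `Q s` with `s` elements, for `1 ≤ s ≤ n`, none of which contains another, and
distribute `Q s` as tickets over a class of size `s`: then a proper part of the class never
looks like a whole class. A family over `k + 1` letters is obtained from families over `k` letters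
by using the new letter `s, s - 1, …, 0` times in successive ranges of sizes. This iterates the
function that bounds these ranges, as in the definition of the Ackermann function, so
`O(α⁻¹(n))` letters are enough.
-/

namespace TiLU

section Ackermann

theorem A_one_left (t : ℕ) : A 1 t = 2 * t := by
  rcases t with _ | _ | t <;> simp [A]

theorem A_one_right (r : ℕ) : A r 1 = 2 := by
  cases r <;> simp [A]

theorem A_add_two_eq_iterate (r t : ℕ) : A (r + 2) (t + 1) = (A (r + 1))^[t + 1] 1 := by
  induction t with
  | zero => simp [A_one_right]
  | succ t ih => rw [Function.iterate_succ_apply', ← ih, A]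

theorem two_mul_le_A : ∀ r t, 2 * t ≤ A r t
  | _, 0 => Nat.zero_le _
  | r, 1 => (A_one_right r).ge
  | 0, t + 2 => by rw [A]
  | 1, t + 2 => (A_one_left _).ge
  | r + 2, t + 2 => by
    have hprev := two_mul_le_A (r + 2) (t + 1)
    have houter := two_mul_le_A (r + 1) (A (r + 2) (t + 1))
    rw [A]
    lia

theorem le_ackFn_invAck (n : ℕ) : n ≤ ackFn (invAck n) := by
  have hn : n ≤ ackFn n := (Nat.le_mul_of_pos_left n two_pos).trans (two_mul_le_A n n)
  exact Nat.sInf_mem (s := {t | n ≤ ackFn t}) ⟨n, hn⟩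

end Ackermann

section Sperner

open Set

variable {τ σ : Type*} {Q R : ℕ → Multiset τ}

/-- A size-indexing Sperner family on the set of sizes `I`: one multiset `Q s` of each size
`s ∈ I`, none of which is contained in another. -/
structure IsSperner (Q : ℕ → Multiset τ) (I : Set ℕ) : Prop where
  card_eq : ∀ s ∈ I, (Q s).card = s
  eq_of_le : ∀ s ∈ I, ∀ t ∈ I, Q s ≤ Q t → s = t

variable (τ) in
/-- The alphabet `τ` carries a size-indexing Sperner family on the sizes in `I`. -/
def HasSperner (I : Set ℕ) : Prop :=
  ∃ Q : ℕ → Multiset τ, IsSperner Q I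

theorem IsSperner.mono {I J : Set ℕ} (hQ : IsSperner Q J) (hIJ : I ⊆ J) : IsSperner Q I where
  card_eq s hs := hQ.card_eq s (hIJ hs)
  eq_of_le s hs t ht := hQ.eq_of_le s (hIJ hs) t (hIJ ht)

theorem IsSperner.map {I : Set ℕ} (hQ : IsSperner Q I) (f : τ ↪ σ) :
    IsSperner (fun s => (Q s).map f) I where
  card_eq s hs := by rw [Multiset.card_map, hQ.card_eq s hs]
  eq_of_le s hs t ht hle :=
    hQ.eq_of_le s hs t ht ((Multiset.map_le_map_iff f.injective).1 hle)

theorem IsSperner.const_add {I : Set ℕ} (hQ : IsSperner Q I) (C : Multiset τ) :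
    IsSperner (fun s => C + Q (s - C.card)) ((fun s => s + C.card) '' I) where
  card_eq := by
    rintro _ ⟨s, hs, rfl⟩
    simp only [Nat.add_sub_cancel, Multiset.card_add, hQ.card_eq s hs, Nat.add_comm]
  eq_of_le := by
    rintro _ ⟨s, hs, rfl⟩ _ ⟨t, ht, rfl⟩ hle
    simp only [Nat.add_sub_cancel, Multiset.add_le_add_iff_left] at hle
    rw [hQ.eq_of_le s hs t ht hle]

theorem IsSperner.append {a b c d : ℕ} (hQ : IsSperner Q (Icc a b)) (hR : IsSperner R (Icc c d))
    (hcb : c ≤ b + 1) (hQR : ∀ s ∈ Icc a b, ∀ t ∈ Icc c d, ¬ Q s ≤ R t) :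
    IsSperner (fun s => if s ≤ b then Q s else R s) (Icc a d) := by
  have hcard : ∀ s ∈ Icc a d, (if s ≤ b then Q s else R s).card = s := by
    intro s ⟨has, hsd⟩
    split_ifs with hsb
    · exact hQ.card_eq s ⟨has, hsb⟩
    · exact hR.card_eq s ⟨by lia, hsd⟩
  refine ⟨hcard, fun s hs t ht hle => ?_⟩
  have hst : s ≤ t := by
    simpa only [hcard s hs, hcard t ht] using Multiset.card_le_card hle
  obtain ⟨has, hsd⟩ := hs
  obtain ⟨hat, htd⟩ := ht
  split_ifs at hle with hsb htb htb
  · exact hQ.eq_of_le s ⟨has, hsb⟩ t ⟨hat, htb⟩ hle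
  · exact absurd hle (hQR s ⟨has, hsb⟩ t ⟨by lia, htd⟩)
  · lia
  · exact hR.eq_of_le s ⟨by lia, hsd⟩ t ⟨by lia, htd⟩ hle

theorem isSperner_replicate {I : Set ℕ} {f : ℕ → τ} (hf : InjOn f I) (hI : 0 ∉ I) :
    IsSperner (fun s => Multiset.replicate s (f s)) I where
  card_eq s _ := Multiset.card_replicate s (f s)
  eq_of_le s hs t ht hle := by
    have hmem : f s ∈ Multiset.replicate s (f s) :=
      Multiset.mem_replicate.2 ⟨ne_of_mem_of_not_mem hs hI, rfl⟩
    exact hf hs ht (Multiset.eq_of_mem_replicate (Multiset.mem_of_le hle hmem))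

theorem HasSperner.of_card_le {I : Set ℕ} [Fintype τ] [Fintype σ] (h : HasSperner τ I)
    (hcard : Fintype.card τ ≤ Fintype.card σ) : HasSperner σ I :=
  let ⟨_, hQ⟩ := h
  let ⟨f⟩ := Function.Embedding.nonempty_of_card_le hcard
  ⟨_, hQ.map f⟩

theorem HasSperner.sum {a b c : ℕ} (hτ : HasSperner τ (Icc a b))
    (hσ : HasSperner σ (Icc (b + 1) c)) (ha : 0 < a) : HasSperner (τ ⊕ σ) (Icc a c) := by
  obtain ⟨Q, hQ⟩ := hτ
  obtain ⟨R, hR⟩ := hσ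
  refine ⟨_, (hQ.map .inl).append (hR.map .inr) le_rfl fun s hs t _ hle => ?_⟩
  obtain ⟨x, hx⟩ : ∃ x, x ∈ Q s :=
    Multiset.card_pos_iff_exists_mem.1 (by rw [hQ.card_eq s hs]; exact ha.trans_le hs.1)
  simpa using Multiset.mem_of_le hle (Multiset.mem_map_of_mem _ hx)

theorem hasSperner_bool (s : ℕ) : HasSperner Bool (Icc s (2 * s)) := by
  refine ⟨fun w => .replicate (2 * s - w) true + .replicate (2 * (w - s)) false, ?_, ?_⟩
  · intro w ⟨hsw, hws⟩
    simp only [Multiset.card_add, Multiset.card_replicate]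
    lia
  · intro w ⟨hsw, hws⟩ v ⟨hsv, hvs⟩ hle
    have htrue := Multiset.count_le_of_le true hle
    have hfalse := Multiset.count_le_of_le false hle
    simp only [Multiset.count_add, Multiset.count_replicate] at htrue hfalse
    lia

/-- The sizes are covered in `a + 1` stages, each using one copy of `none` fewer than the stage
before; hence no multiset of an earlier stage is contained in one of a later stage. -/
theorem exists_isSperner_count_none_le [DecidableEq τ] {W : ℕ → ℕ}
    (hW : ∀ s, HasSperner τ (Icc s (W s))) (a x : ℕ) :
    ∃ Q : ℕ → Multiset (Option τ), IsSperner Q (Icc (x + a) (W^[a + 1] x)) ∧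
      ∀ s, (Q s).count none ≤ a := by
  have count_none_map_some (C : Multiset τ) : (C.map Function.Embedding.some).count none = 0 :=
    Multiset.count_eq_zero.2 (by simp)
  induction a generalizing x with
  | zero =>
    obtain ⟨Q, hQ⟩ := hW x
    exact ⟨_, hQ.map .some, fun s => (count_none_map_some _).le⟩
  | succ a ih =>
    obtain ⟨Q, hQ⟩ := hW x
    obtain ⟨R, hR, hRcount⟩ := ih (W x)
    have hfirst := (hQ.map .some).const_add (Multiset.replicate (a + 1) none)
    rw [image_add_const_Icc, Multiset.card_replicate] at hfirst
    have hcount : ∀ s, (Multiset.replicate (a + 1) none +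
        (Q (s - (a + 1))).map Function.Embedding.some).count none = a + 1 := fun s => by
      rw [Multiset.count_add, Multiset.count_replicate_self, count_none_map_some, add_zero]
    refine ⟨_, hfirst.append hR (by lia) fun s _ t _ hle => ?_, fun s => ?_⟩
    · have hst := (Multiset.count_le_of_le none hle).trans (hRcount t)
      rw [hcount] at hst
      lia
    · split_ifs
      · exact (hcount s).le
      · exact (hRcount s).trans a.le_succ

theorem HasSperner.option {W : ℕ → ℕ} (hW : ∀ s, HasSperner τ (Icc s (W s))) (s : ℕ) :
    HasSperner (Option τ) (Icc (s + 1) (W^[s + 1] 1)) := by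
  classical
  obtain ⟨Q, hQ, -⟩ := exists_isSperner_count_none_le hW s 1
  exact ⟨Q, Nat.add_comm 1 s ▸ hQ⟩

theorem hasSperner_A (r s : ℕ) : HasSperner (Fin (r + 2)) (Icc s (A (r + 1) s)) := by
  induction r generalizing s with
  | zero =>
    rw [A_one_left]
    exact (hasSperner_bool s).of_card_le (by simp)
  | succ r ih =>
    cases s with
    | zero => exact ⟨fun _ => 0, by simp [A], by simp [A]⟩
    | succ s =>
      rw [A_add_two_eq_iterate]
      exact (HasSperner.option ih s).of_card_le (by simp)

theorem hasSperner_Icc_one_fin (m : ℕ) : HasSperner (Fin (m + 1)) (Icc 1 m) := by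
  refine ⟨_, isSperner_replicate (f := Fin.ofNat (m + 1)) ?_ (by simp)⟩
  intro s ⟨_, hs⟩ t ⟨_, ht⟩ hst
  simpa [Fin.ext_iff, Nat.mod_eq_of_lt, hs, ht, Nat.lt_succ_iff] using hst

theorem hasSperner_Icc_one_ackFn (t : ℕ) : HasSperner (Fin (2 * t + 1)) (Icc 1 (ackFn t)) := by
  cases t with
  | zero => exact ⟨fun _ => 0, by simp [ackFn, A], by simp [ackFn, A]⟩
  | succ r =>
    have hsum := (hasSperner_Icc_one_fin r).sum (hasSperner_A r (r + 1)) one_pos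
    exact hsum.of_card_le (by simp only [Fintype.card_sum, Fintype.card_fin]; lia)

theorem hasSperner_bitstrings (n : ℕ) :
    HasSperner (Fin (Nat.clog 2 (2 * invAck n + 1)) → Bool) (Icc 1 n) := by
  obtain ⟨Q, hQ⟩ := hasSperner_Icc_one_ackFn (invAck n)
  have hn : HasSperner (Fin (2 * invAck n + 1)) (Icc 1 n) :=
    ⟨Q, hQ.mono (Icc_subset_Icc_right (le_ackFn_invAck n))⟩
  refine hn.of_card_le ?_
  simp only [Fintype.card_fin, Fintype.card_fun, Fintype.card_bool]
  exact Nat.le_pow_clog one_lt_two _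

end Sperner

section DyadicSplit

variable {m k : ℕ} {U V U' V' : Set ℕ}

/-- The height of the lowest dyadic block `{y | y / 2 ^ k = q}` containing both `m` and `y`,
computed from the most significant bit in which they differ. -/
def dyadicDist (m y : ℕ) : ℕ :=
  (m ^^^ y).size

theorem dyadicDist_le_iff {y : ℕ} : dyadicDist m y ≤ k ↔ m / 2 ^ k = y / 2 ^ k := by
  rw [dyadicDist, Nat.size_le, ← Nat.div_eq_zero_iff_lt (by positivity), Nat.xor_div_two_pow,
    Nat.xor_eq_zero_iff]

/-- The point `m` is a threshold between `U` and `V`. -/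
def Separates (m : ℕ) (U V : Set ℕ) : Prop :=
  (∀ u ∈ U, u < m) ∧ ∀ v ∈ V, m ≤ v

/-- The dyadic distance from `m` to the nearest point of `U`. -/
noncomputable def dyadicInfDist (m : ℕ) (U : Set ℕ) : ℕ :=
  sInf (dyadicDist m '' U)

/-- The midpoint of the dyadic block of height `k` around `m`; meaningful only for `0 < k`. -/
def dyadicMidpoint (m k : ℕ) : ℕ :=
  (2 * (m / 2 ^ k) + 1) * 2 ^ (k - 1)

/-- The midpoint of the smallest dyadic block around `m` that meets both `U` and `V`. -/
noncomputable def dyadicSplit (m : ℕ) (U V : Set ℕ) : ℕ :=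
  dyadicMidpoint m (max (dyadicInfDist m U) (dyadicInfDist m V))

theorem Separates.mono (h : Separates m U' V') (hU : U ⊆ U') (hV : V ⊆ V') : Separates m U V :=
  ⟨fun u hu => h.1 u (hU hu), fun v hv => h.2 v (hV hv)⟩

theorem Separates.lt (h : Separates m U V) {u v : ℕ} (hu : u ∈ U) (hv : v ∈ V) : u < v :=
  (h.1 u hu).trans_le (h.2 v hv)

theorem Separates.div_eq (h : Separates m U V) {u v d : ℕ} (hu : u ∈ U) (hv : v ∈ V)
    (huv : u / d = v / d) : m / d = u / d :=
  le_antisymm ((Nat.div_le_div_right (h.2 v hv)).trans huv.ge)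
    (Nat.div_le_div_right (h.1 u hu).le)

theorem dyadicInfDist_le_iff (hU : U.Nonempty) :
    dyadicInfDist m U ≤ k ↔ ∃ u ∈ U, m / 2 ^ k = u / 2 ^ k := by
  simp only [← dyadicDist_le_iff]
  constructor
  · intro hle
    obtain ⟨u, hu, hdist⟩ := Nat.sInf_mem (hU.image (dyadicDist m))
    exact ⟨u, hu, hdist.le.trans hle⟩
  · rintro ⟨u, hu, hle⟩
    exact (Nat.sInf_le (Set.mem_image_of_mem _ hu)).trans hle

theorem Separates.max_dyadicInfDist_le_iff (h : Separates m U V) (hU : U.Nonempty)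
    (hV : V.Nonempty) :
    max (dyadicInfDist m U) (dyadicInfDist m V) ≤ k ↔
      ∃ u ∈ U, ∃ v ∈ V, u / 2 ^ k = v / 2 ^ k := by
  rw [max_le_iff, dyadicInfDist_le_iff hU, dyadicInfDist_le_iff hV]
  constructor
  · rintro ⟨⟨u, hu, hmu⟩, v, hv, hmv⟩
    exact ⟨u, hu, v, hv, hmu.symm.trans hmv⟩
  · rintro ⟨u, hu, v, hv, huv⟩
    have hmu := h.div_eq hu hv huv
    exact ⟨⟨u, hu, hmu⟩, v, hv, hmu.trans huv⟩

theorem Separates.dyadicSplit_eq {m' : ℕ} (h : Separates m U V) (h' : Separates m' U V)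
    (hU : U.Nonempty) (hV : V.Nonempty) : dyadicSplit m U V = dyadicSplit m' U V := by
  have hheight : max (dyadicInfDist m U) (dyadicInfDist m V) =
      max (dyadicInfDist m' U) (dyadicInfDist m' V) :=
    eq_of_forall_ge_iff fun k => by
      rw [h.max_dyadicInfDist_le_iff hU hV, h'.max_dyadicInfDist_le_iff hU hV]
  obtain ⟨u, hu, v, hv, huv⟩ := (h'.max_dyadicInfDist_le_iff hU hV).1 le_rfl
  rw [dyadicSplit, dyadicSplit, dyadicMidpoint, dyadicMidpoint, hheight, h.div_eq hu hv huv,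
    h'.div_eq hu hv huv]

/-- By minimality of the block, its lower half meets only `U` and its upper half only `V`. -/
theorem Separates.separates_dyadicSplit (h : Separates m U V) (hU : U.Nonempty) (hV : V.Nonempty) :
    Separates (dyadicSplit m U V) U V := by
  have hle_iff (k : ℕ) := h.max_dyadicInfDist_le_iff (k := k) hU hV
  rw [dyadicSplit]
  generalize max (dyadicInfDist m U) (dyadicInfDist m V) = K at hle_iff
  obtain ⟨u₀, hu₀, v₀, hv₀, huv₀⟩ := (hle_iff K).1 le_rfl
  have hm := h.div_eq hu₀ hv₀ huv₀
  cases K with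
  | zero => exact absurd (by simpa using huv₀) (h.lt hu₀ hv₀).ne
  | succ j =>
    have hhalf : ∀ u ∈ U, ∀ v ∈ V, u / 2 ^ j < v / 2 ^ j := fun u hu v hv =>
      (Nat.div_le_div_right (h.lt hu hv).le).lt_of_ne fun heq =>
        absurd ((hle_iff j).2 ⟨u, hu, v, hv, heq⟩) (by lia)
    have hpos : 0 < 2 ^ j := by positivity
    have huv₀_lt := hhalf u₀ hu₀ v₀ hv₀
    simp only [dyadicMidpoint, Nat.add_sub_cancel, pow_succ, ← Nat.div_div_eq_div_mul]
      at hm huv₀ ⊢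
    constructor
    · intro u hu
      rw [← Nat.div_lt_iff_lt_mul hpos]
      have := hhalf u hu v₀ hv₀
      lia
    · intro v hv
      rw [← Nat.le_div_iff_mul_le hpos]
      have := hhalf u₀ hu₀ v hv
      lia

/-- A threshold between `U` and `V` that depends on these sets only: any other threshold between
them may replace the base point `sInf V`. -/
noncomputable def canonicalSplit (U V : Set ℕ) : ℕ :=
  dyadicSplit (sInf V) U V

theorem Separates.separates_sInf (h : Separates m U V) (hV : V.Nonempty) : Separates (sInf V) U V :=
  ⟨fun _ hu => h.lt hu (Nat.sInf_mem hV), fun _ hv => Nat.sInf_le hv⟩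

theorem Separates.canonicalSplit_eq (h : Separates m U V) (hU : U.Nonempty) (hV : V.Nonempty) :
    canonicalSplit U V = dyadicSplit m U V :=
  (h.separates_sInf hV).dyadicSplit_eq h hU hV

theorem Separates.separates_canonicalSplit (h : Separates m U V) (hU : U.Nonempty)
    (hV : V.Nonempty) :
    Separates (canonicalSplit U V) U V :=
  (h.separates_sInf hV).separates_dyadicSplit hU hV

end DyadicSplit

section Tickets

variable {ι τ γ : Type*} {Q : ℕ → Multiset τ} {n : ℕ}

theorem exists_map_univ_eq [Fintype ι] {C : Multiset τ} (hC : C.card = Fintype.card ι) :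
    ∃ f : ι → τ, Finset.univ.val.map f = C := by
  classical
  let e : ι ≃ C.ToType := Fintype.equivOfCardEq (by rw [Multiset.card_coe, hC])
  refine ⟨fun i => (e i).1, Eq.trans ?_ C.map_univ_coe⟩
  rw [← Multiset.map_univ_val_equiv e, Multiset.map_map]
  rfl

variable [Fintype ι] [DecidableEq γ]

/-- The tickets `tk` encode in every nonempty class of `cl` the size of this class, by
distributing among its members the multiset that `Q` assigns to that size. -/
def IsTicketing (Q : ℕ → Multiset τ) (cl : ι → γ) (tk : ι → τ) : Prop :=
  ∀ c, {i | cl i = c}.Nonempty →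
    ({i | cl i = c} : Finset ι).val.map tk = Q ({i | cl i = c} : Finset ι).card

theorem IsSperner.exists_isTicketing (hQ : IsSperner Q (Set.Icc 1 n))
    (hn : Fintype.card ι ≤ n) (cl : ι → γ) : ∃ tk, IsTicketing Q cl tk := by
  have hclass (c : γ) : ∃ f : {i // cl i = c} → τ, {i | cl i = c}.Nonempty →
      Finset.univ.val.map f = Q (Fintype.card {i // cl i = c}) := by
    rcases isEmpty_or_nonempty {i // cl i = c} with hempty | hne
    · exact ⟨isEmptyElim, fun ⟨i, hi⟩ => hempty.elim ⟨i, hi⟩⟩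
    · obtain ⟨f, hf⟩ := exists_map_univ_eq (ι := {i // cl i = c})
        (hQ.card_eq _ ⟨Fintype.card_pos, (Fintype.card_subtype_le _).trans hn⟩)
      exact ⟨f, fun _ => hf⟩
  choose f hf using hclass
  refine ⟨fun i => f (cl i) ⟨i, rfl⟩, fun c hc => ?_⟩
  rw [← Fintype.card_subtype, ← hf c hc, ← Finset.univ_val_map_subtype_restrict]
  refine Multiset.map_congr rfl ?_
  rintro ⟨i, rfl⟩ _
  rfl

/-- The tickets `C` are those of an entire class, judged from `C` alone. -/
def Exhausted (Q : ℕ → Multiset τ) (C : Multiset τ) : Prop :=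
  0 < C.card ∧ C = Q C.card

/-- The tickets of a proper nonempty part of a class cannot be mistaken for those of a whole
class: they would form a member of the Sperner family contained in a larger one. -/
theorem IsTicketing.exhausted_iff {cl : ι → γ} {tk : ι → τ} (htk : IsTicketing Q cl tk)
    (hQ : IsSperner Q (Set.Icc 1 n)) (hn : Fintype.card ι ≤ n) (I : Finset ι) (c : γ) :
    Exhausted Q ((I.filter fun i => cl i = c).val.map tk) ↔
      (∃ i, cl i = c) ∧ ∀ i, cl i = c → i ∈ I := by
  set D : Finset ι := {i | cl i = c} with hD
  set J := I.filter fun i => cl i = c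
  have hJD : J ⊆ D := Finset.filter_subset_filter _ (Finset.subset_univ I)
  have hmemD {i : ι} : i ∈ D ↔ cl i = c := by simp [hD]
  rw [Exhausted, Multiset.card_map, Finset.card_val, Finset.card_pos]
  constructor
  · rintro ⟨hne, hQJ⟩
    obtain ⟨i, hi⟩ := hne.mono hJD
    have hQD := htk c ⟨i, hmemD.1 hi⟩
    have hle : Q J.card ≤ Q D.card := by
      rw [← hQJ, ← hQD]
      exact Multiset.map_le_map (Finset.val_le_iff.2 hJD)
    have hcard {E : Finset ι} (hE : E.Nonempty) : E.card ∈ Set.Icc 1 n :=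
      ⟨hE.card_pos, E.card_le_univ.trans hn⟩
    have hJ_eq : J = D := Finset.eq_of_subset_of_card_le hJD
      (hQ.eq_of_le _ (hcard hne) _ (hcard (hne.mono hJD)) hle).ge
    exact ⟨⟨i, hmemD.1 hi⟩, fun j hj => Finset.filter_subset _ _ (hJ_eq ▸ hmemD.2 hj)⟩
  · rintro ⟨⟨i, hi⟩, hall⟩
    have hJ_eq : J = D := by grind
    rw [hJ_eq]
    exact ⟨⟨i, hmemD.2 hi⟩, htk c ⟨i, hi⟩⟩

theorem IsTicketing.exists_notMem_iff {cl : ι → γ} {tk : ι → τ} (htk : IsTicketing Q cl tk)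
    (hQ : IsSperner Q (Set.Icc 1 n)) (hn : Fintype.card ι ≤ n) (I : Finset ι) (c : γ) :
    (∃ i ∉ I, cl i = c) ↔
      (∃ i, cl i = c) ∧ ¬ Exhausted Q ((I.filter fun i => cl i = c).val.map tk) := by
  rw [htk.exhausted_iff hQ hn]
  grind

end Tickets

section Schemes

variable {X A₁ A₂ T : Type} {H : Set (X → Bool)} {n : ℕ}

/-- There is a ticketed learning–unlearning scheme for `H`, valid for realizable datasets of size
at most `n`, whose auxiliary information lies in `Aux` and whose tickets lie in `T`. -/
def HasTicketedScheme (H : Set (X → Bool)) (n : ℕ) (Aux T : Type) : Prop :=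
  ∃ (Learn : (S : List (X × Bool)) → (X → Bool) × Aux × (Fin S.length → T))
    (Unlearn : Multiset ((X × Bool) × T) → Aux → (X → Bool)),
    ∀ S : List (X × Bool), S.length ≤ n → IsRealizable H S →
      (Learn S).1 ∈ ERM H S ∧
      ∀ I : Finset (Fin S.length),
        Unlearn (removedPairs S (Learn S).2.2 I) (Learn S).2.1 = (Learn (surviving S I)).1

theorem HasTicketedScheme.map_aux [Nonempty A₁] (h : HasTicketedScheme H n A₁ T) (f : A₁ ↪ A₂) :
    HasTicketedScheme H n A₂ T := by
  obtain ⟨Learn, Unlearn, hLU⟩ := h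
  refine ⟨fun S => ((Learn S).1, f (Learn S).2.1, (Learn S).2.2),
    fun R a => Unlearn R (Function.invFun f a), fun S hn hS => ?_⟩
  simpa only [Function.leftInverse_invFun f.injective _] using hLU S hn hS

theorem HasTicketedScheme.of_forall_exists [Nonempty A₁] [Nonempty T]
    (learn : List (X × Bool) → X → Bool)
    (unlearn : Multiset ((X × Bool) × T) → A₁ → X → Bool)
    (hERM : ∀ S, IsRealizable H S → learn S ∈ ERM H S)
    (h : ∀ S : List (X × Bool), S.length ≤ n → IsRealizable H S →
      ∃ p : A₁ × (Fin S.length → T), ∀ I : Finset (Fin S.length),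
        unlearn (removedPairs S p.2 I) p.1 = learn (surviving S I)) :
    HasTicketedScheme H n A₁ T :=
  ⟨fun S => (learn S, Classical.epsilon fun p => ∀ I : Finset (Fin S.length),
      unlearn (removedPairs S p.2 I) p.1 = learn (surviving S I)),
    unlearn, fun S hn hS => ⟨hERM S hS, Classical.epsilon_spec (h S hn hS)⟩⟩

theorem empLoss_eq_zero_iff {h : X → Bool} {S : List (X × Bool)} :
    empLoss h S = 0 ↔ ∀ z ∈ S, h z.1 = z.2 := by
  simp only [empLoss, List.sum_eq_zero_iff, List.forall_mem_map, ite_eq_left_iff, one_ne_zero,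
    imp_false, not_not]

theorem mem_ERM_of_empLoss_eq_zero {h : X → Bool} {S : List (X × Bool)} (hH : h ∈ H)
    (hS : empLoss h S = 0) : h ∈ ERM H S :=
  ⟨hH, fun g _ => hS.trans_le (Nat.zero_le (empLoss g S))⟩

theorem mem_surviving {Z : Type} {S : List Z} {I : Finset (Fin S.length)} {z : Z} :
    z ∈ surviving S I ↔ ∃ i ∉ I, S.get i = z := by
  simp [surviving]

theorem filter_removedPairs {Z γ : Type} [DecidableEq γ] (S : List Z) (tk : Fin S.length → T)
    (I : Finset (Fin S.length)) (cl : Z → γ) (c : γ) :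
    ((removedPairs S tk I).filter fun p => cl p.1 = c).map Prod.snd =
      (I.filter fun i => cl (S.get i) = c).val.map tk := by
  rw [removedPairs, Multiset.filter_map, Multiset.map_map, Finset.filter_val]
  rfl

end Schemes

section Thresholds

variable {N : ℕ} {S : List (Fin N × Bool)}

/-- The artificial position carrying label `b` that every dataset over `{1, …, N}` is given: `0`
is labelled negative and `N + 1` positive. -/
def sentinel (N : ℕ) (b : Bool) : ℕ :=
  if b then N + 1 else 0

/-- The positions in `{0, …, N + 1}` labelled `b` by `S`, including the sentinel; as in `thrFn`,
the element `x : Fin N` sits at position `x + 1`. -/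
def positions (S : List (Fin N × Bool)) (b : Bool) : Set ℕ :=
  insert (sentinel N b) ((fun z => (z.1 : ℕ) + 1) '' {z | z ∈ S ∧ z.2 = b})

theorem positions_nonempty (S : List (Fin N × Bool)) (b : Bool) : (positions S b).Nonempty :=
  Set.insert_nonempty _ _

theorem positions_surviving_subset (I : Finset (Fin S.length)) (b : Bool) :
    positions (surviving S I) b ⊆ positions S b := by
  refine Set.insert_subset_insert (Set.image_mono fun z ⟨hz, hb⟩ => ⟨?_, hb⟩)
  obtain ⟨i, -, rfl⟩ := mem_surviving.1 hz
  exact List.get_mem S i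

theorem separates_positions_iff {a : ℕ} :
    Separates (a + 1) (positions S false) (positions S true) ↔
      a ≤ N ∧ empLoss (thrFn N a) S = 0 := by
  simp only [Separates, positions, sentinel, Set.forall_mem_insert, Set.forall_mem_image,
    Set.mem_ofPred_eq, empLoss_eq_zero_iff, thrFn]
  grind

/-- The threshold position that the scheme learns from `S`. -/
noncomputable def learnedSplit (S : List (Fin N × Bool)) : ℕ :=
  canonicalSplit (positions S false) (positions S true)

theorem exists_separates_positions (hS : IsRealizable (Hthr N) S) :
    ∃ m, Separates m (positions S false) (positions S true) := by
  obtain ⟨_, ⟨a, ha, rfl⟩, hloss⟩ := hS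
  exact ⟨a + 1, separates_positions_iff.2 ⟨ha, hloss⟩⟩

theorem separates_learnedSplit (hS : IsRealizable (Hthr N) S) :
    Separates (learnedSplit S) (positions S false) (positions S true) :=
  let ⟨_, hm⟩ := exists_separates_positions hS
  hm.separates_canonicalSplit (positions_nonempty S false) (positions_nonempty S true)

theorem exists_learnedSplit_eq_add_one (hS : IsRealizable (Hthr N) S) :
    ∃ a ≤ N, learnedSplit S = a + 1 ∧ empLoss (thrFn N a) S = 0 := by
  have hsep := separates_learnedSplit hS
  have hpos : 0 < learnedSplit S := hsep.1 _ (Set.mem_insert _ _)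
  obtain ⟨a, ha⟩ := Nat.exists_eq_add_one.2 hpos
  obtain ⟨haN, hloss⟩ := separates_positions_iff.1 (ha ▸ hsep)
  exact ⟨a, haN, ha, hloss⟩

theorem thrFn_learnedSplit_mem_ERM (hS : IsRealizable (Hthr N) S) :
    thrFn N (learnedSplit S - 1) ∈ ERM (Hthr N) S := by
  obtain ⟨a, haN, ha, hloss⟩ := exists_learnedSplit_eq_add_one hS
  rw [ha, Nat.add_sub_cancel]
  exact mem_ERM_of_empLoss_eq_zero ⟨a, haN, rfl⟩ hloss

/-- Ticket classes: examples are grouped by label and dyadic distance from the split `m`. -/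
def exampleClass (m : ℕ) (z : Fin N × Bool) : Bool × ℕ :=
  (z.2, dyadicDist m (z.1 + 1))

/-- The auxiliary information before its encoding by bits: the learned split, and the set of
nonempty classes, where `L` bounds all dyadic distances. -/
abbrev ThresholdAux (N L : ℕ) : Type :=
  Fin (N + 2) × Set (Bool × Fin (L + 1))

/-- The dyadic distance from the learned split to the nearest survivor labelled `b`, recovered
from the unlearning request and the auxiliary information. -/
noncomputable def recoveredDist {N L : ℕ} {T : Type} (Q : ℕ → Multiset T)
    (R : Multiset ((Fin N × Bool) × T)) (a : ThresholdAux N L) (b : Bool) : ℕ :=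
  sInf (insert (dyadicDist a.1 (sentinel N b)) (Fin.val '' {k | (b, k) ∈ a.2 ∧
    ¬ Exhausted Q ((R.filter fun p => exampleClass a.1 p.1 = (b, k.val)).map Prod.snd)}))

/-- The threshold position to which the scheme moves on an unlearning request. -/
noncomputable def unlearnedSplit {N L : ℕ} {T : Type} (Q : ℕ → Multiset T)
    (R : Multiset ((Fin N × Bool) × T)) (a : ThresholdAux N L) : ℕ :=
  dyadicMidpoint a.1 (max (recoveredDist Q R a false) (recoveredDist Q R a true))

theorem dyadicInfDist_positions_surviving (m : ℕ) (I : Finset (Fin S.length)) (b : Bool) :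
    dyadicInfDist m (positions (surviving S I) b) =
      sInf (insert (dyadicDist m (sentinel N b))
        {k | ∃ i ∉ I, exampleClass m (S.get i) = (b, k)}) := by
  rw [dyadicInfDist, positions, Set.image_insert_eq, Set.image_image]
  congr 2
  ext k
  simp only [Set.mem_image, Set.mem_ofPred_eq, mem_surviving, exampleClass, Prod.mk.injEq]
  grind

theorem dyadicDist_le_of_lt {L m y : ℕ} (hm : m < 2 ^ L) (hy : y < 2 ^ L) :
    dyadicDist m y ≤ L := by
  rw [dyadicDist_le_iff, Nat.div_eq_of_lt hm, Nat.div_eq_of_lt hy]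

theorem recoveredDist_eq {L n : ℕ} {T : Type} {Q : ℕ → Multiset T}
    (hQ : IsSperner Q (Set.Icc 1 n)) (hL : N + 2 ≤ 2 ^ L) (hn : S.length ≤ n) (m : Fin (N + 2))
    {tk : Fin S.length → T} (htk : IsTicketing Q (fun i => exampleClass m (S.get i)) tk)
    (I : Finset (Fin S.length)) (b : Bool) :
    recoveredDist (L := L) Q (removedPairs S tk I)
        (m, {c | ∃ i, exampleClass m (S.get i) = (c.1, c.2.val)}) b =
      dyadicInfDist m (positions (surviving S I) b) := by
  have hlt {k : ℕ} (hk : ∃ i, exampleClass m (S.get i) = (b, k)) : k < L + 1 := by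
    obtain ⟨i, hi⟩ := hk
    obtain rfl : dyadicDist m ((S.get i).1 + 1) = k := congrArg Prod.snd hi
    exact Nat.lt_succ_of_le (dyadicDist_le_of_lt (by lia) (by lia))
  rw [dyadicInfDist_positions_surviving, recoveredDist]
  congr 2
  ext k
  simp only [Set.mem_image, Set.mem_ofPred_eq, filter_removedPairs,
    htk.exists_notMem_iff hQ (by simpa using hn)]
  constructor
  · rintro ⟨k, hk, rfl⟩
    exact hk
  · rintro hk
    exact ⟨⟨k, hlt hk.1⟩, hk, rfl⟩

theorem exists_unlearnedSplit_eq {L n : ℕ} {T : Type} {Q : ℕ → Multiset T}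
    (hQ : IsSperner Q (Set.Icc 1 n)) (hL : N + 2 ≤ 2 ^ L) (hn : S.length ≤ n)
    (hS : IsRealizable (Hthr N) S) :
    ∃ p : ThresholdAux N L × (Fin S.length → T), ∀ I : Finset (Fin S.length),
      unlearnedSplit Q (removedPairs S p.2 I) p.1 = learnedSplit (surviving S I) := by
  obtain ⟨a, haN, ha, -⟩ := exists_learnedSplit_eq_add_one hS
  let m : Fin (N + 2) := ⟨learnedSplit S, by lia⟩
  obtain ⟨tk, htk⟩ := hQ.exists_isTicketing (by simpa using hn)
    fun i => exampleClass m (S.get i)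
  refine ⟨((m, {c | ∃ i, exampleClass m (S.get i) = (c.1, c.2.val)}), tk), fun I => ?_⟩
  have hsep : Separates m (positions (surviving S I) false) (positions (surviving S I) true) :=
    (separates_learnedSplit hS).mono (positions_surviving_subset I _)
      (positions_surviving_subset I _)
  rw [unlearnedSplit, recoveredDist_eq hQ hL hn m htk, recoveredDist_eq hQ hL hn m htk,
    learnedSplit, hsep.canonicalSplit_eq (positions_nonempty _ _) (positions_nonempty _ _),
    dyadicSplit]

theorem hasTicketedScheme_Hthr {L n : ℕ} {T : Type} [Nonempty T] (hL : N + 2 ≤ 2 ^ L)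
    (hT : HasSperner T (Set.Icc 1 n)) :
    HasTicketedScheme (Hthr N) n (ThresholdAux N L) T := by
  obtain ⟨Q, hQ⟩ := hT
  refine .of_forall_exists (fun S => thrFn N (learnedSplit S - 1))
    (fun R a => thrFn N (unlearnedSplit Q R a - 1)) (fun S => thrFn_learnedSplit_mem_ERM)
    fun S hn hS => ?_
  obtain ⟨p, hp⟩ := exists_unlearnedSplit_eq hQ hL hn hS
  exact ⟨p, fun I => by rw [hp]⟩

theorem exists_thresholdAux_embedding {L : ℕ} (hL : N + 2 ≤ 2 ^ L) :
    Nonempty (ThresholdAux N L ↪ (Fin (3 * L + 2) → Bool)) := by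
  classical
  refine Function.Embedding.nonempty_of_card_le ?_
  simp only [Fintype.card_prod, Fintype.card_set, Fintype.card_fin, Fintype.card_fun,
    Fintype.card_bool]
  calc (N + 2) * 2 ^ (2 * (L + 1)) ≤ 2 ^ L * 2 ^ (2 * (L + 1)) := Nat.mul_le_mul_right _ hL
    _ = 2 ^ (3 * L + 2) := by ring

end Thresholds

theorem clog_two_le_add_two {m n : ℕ} (h : m ≤ 2 * n + 2) : Nat.clog 2 m ≤ Nat.clog 2 n + 2 := by
  have hn : n ≤ 2 ^ Nat.clog 2 n := Nat.le_pow_clog one_lt_two n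
  have hpos : 1 ≤ 2 ^ Nat.clog 2 n := Nat.one_le_two_pow
  exact Nat.clog_le_of_le_pow (by rw [pow_add]; lia)

end TiLU

open TiLU in
/-- **Theorem (TiLU scheme for 1D thresholds).** There is a constant `c` such that for every
domain size `N` and dataset size `n`, there is a ticketed learning–unlearning scheme for the
class of 1D thresholds over `{1, …, N}`, valid for realizable datasets of size (at most) `n`,
with auxiliary information of `O(log|X|)` bits and tickets of only `O(log α⁻¹(n))` bits:
`Learn S` returns an empirical risk minimizer, the auxiliary string, and a ticket per
example, and for every unlearning request `I` (consisting of the removed examples together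
with their tickets), `Unlearn` returns exactly the hypothesis that `Learn` returns
on `S ∖ S_I`. -/
theorem thresholds_ticketed_scheme :
    ∃ c : ℕ, 0 < c ∧
      ∀ N n : ℕ, ∃ cs ct : ℕ,
        cs ≤ c * (Nat.clog 2 N + 1) ∧
        ct ≤ c * (Nat.clog 2 (invAck n) + 1) ∧
        ∃ (Learn : (S : List (Fin N × Bool)) →
              (Fin N → Bool) × (Fin cs → Bool) × (Fin S.length → Fin ct → Bool))
          (Unlearn : Multiset ((Fin N × Bool) × (Fin ct → Bool)) →
              (Fin cs → Bool) → (Fin N → Bool)),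
          ∀ S : List (Fin N × Bool), S.length ≤ n → IsRealizable (Hthr N) S →
            (Learn S).1 ∈ ERM (Hthr N) S ∧
            ∀ I : Finset (Fin S.length),
              Unlearn (removedPairs S (Learn S).2.2 I) (Learn S).2.1 =
                (Learn (surviving S I)).1 := by
  refine ⟨8, by norm_num, fun N n => ?_⟩
  set L := Nat.clog 2 (N + 2)
  have hL : N + 2 ≤ 2 ^ L := Nat.le_pow_clog one_lt_two _
  have hL_le : L ≤ Nat.clog 2 N + 2 := clog_two_le_add_two (by lia)
  have hct_le : Nat.clog 2 (2 * invAck n + 1) ≤ Nat.clog 2 (invAck n) + 2 :=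
    clog_two_le_add_two (by lia)
  obtain ⟨encode⟩ := exists_thresholdAux_embedding hL
  exact ⟨3 * L + 2, Nat.clog 2 (2 * invAck n + 1), by lia, by lia,
    (hasTicketedScheme_Hthr hL (hasSperner_bitstrings n)).map_aux encode⟩
end
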